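/- arXiv:2106.04818 — 6 statements merged into one kernel-verified Lean document; each statement's English description precedes it below -/
import Mathlib

section
/- Let p be a prime, G a finite group, P a Sylow p-subgroup of G, and χ an irreducible complex character of G. Assume that χ is imprimitive, i.e. χ = ψ^G for some proper subgroup H < G and some irreducible character ψ of H. Assume further that for every proper subgroup K < G, every Sylow p-subgroup S of K, and every irreducible character θ of K, the restriction θ_S is a sum of characters of the form μ^S induced from irreducible characters μ of subgroups R ≤ S with θ(1)_p = |S : R|. Then χ_P is a sum of characters of the form λ^P induced from irreducible characters λ of subgroups Q ≤ P with χ(1)_p = |P : Q|. -/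
open scoped Classical

/-- The induced character (as a class function formula): for `f` a function on a
subgroup `H` of a finite group `G`, `inducedChar H f g = (1/|H|) ∑_{x ∈ G, xgx⁻¹ ∈ H} f (xgx⁻¹)`. -/
noncomputable def inducedChar {G : Type*} [Group G] [Fintype G] (H : Subgroup G)
    (f : H → ℂ) : G → ℂ :=
  fun g => (Fintype.card H : ℂ)⁻¹ *
    ∑ x : G, if h : x * g * x⁻¹ ∈ H then f ⟨x * g * x⁻¹, h⟩ else 0

/-- `χ` is the character of an irreducible complex representation of `G`. -/
def IsIrreducibleCharacter {G : Type} [Group G] (χ : G → ℂ) : Prop :=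
  ∃ V : FDRep ℂ G, CategoryTheory.Simple V ∧ χ = FDRep.character V

/-- The restriction of `χ` (a character of degree `d` of the ambient group `G`) to the
subgroup `P` is a sum of characters `λ^P` induced from irreducible characters `λ` of
subgroups `Q ≤ P` satisfying `d_p = |P : Q|` (the `p`-part of the degree equals the index). -/
def SumInducedProperty (p : ℕ) {G : Type} [Group G] [Fintype G] (P : Subgroup G)
    (χ : G → ℂ) (d : ℕ) : Prop :=
  ∃ (n : ℕ) (Q : Fin n → Subgroup ↥P) (lam : (i : Fin n) → ↥(Q i) → ℂ),
    (∀ i, IsIrreducibleCharacter (lam i)) ∧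
    (∀ i, p ^ (d.factorization p) = (Q i).index) ∧
    (∀ x : ↥P, χ ↑x = ∑ i, inducedChar (Q i) (lam i) x)

def IsCharX {G : Type} [Group G] (f : G → ℂ) : Prop :=
  ∃ (V : Type) (_ : AddCommGroup V) (_ : Module ℂ V) (_ : FiniteDimensional ℂ V)
    (ρ : Representation ℂ G V), f = ρ.character

noncomputable def indX {E G : Type} [Group E] [Fintype E] [Group G] [Fintype G] (φ : E →* G)
    (θ : E → ℂ) (g : G) : ℂ :=
  (Fintype.card E : ℂ)⁻¹ * ∑ x : G, ∑ e : E, if φ e = x * g * x⁻¹ then θ e else 0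

lemma IsIrreducibleCharacter.isCharX {G : Type} [Group G] {f : G → ℂ}
    (h : IsIrreducibleCharacter f) : IsCharX f := by
  obtain ⟨V, -, rfl⟩ := h
  exact ⟨V, inferInstance, inferInstance, inferInstance, V.ρ, rfl⟩

lemma IsCharX.comp {K G : Type} [Group K] [Group G] {f : G → ℂ} (h : IsCharX f) (φ : K →* G) :
    IsCharX (fun k => f (φ k)) := by
  obtain ⟨V, _, _, _, ρ, rfl⟩ := h
  exact ⟨V, _, _, inferInstance, ρ.comp φ, rfl⟩

lemma IsCharX.conj {G : Type} [Group G] {f : G → ℂ} (h : IsCharX f) (x g : G) :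
    f (x * g * x⁻¹) = f g := by
  obtain ⟨V, _, _, _, ρ, rfl⟩ := h
  exact ρ.char_conj g x

lemma trace_shift {G V : Type} [Fintype G] [AddCommGroup V] [Module ℂ V] [FiniteDimensional ℂ V]
    (A : V →ₗ[ℂ] V) (s : G → G) (T : (G → V) →ₗ[ℂ] (G → V)) (hT : ∀ f x, T f x = A (f (s x))) :
    LinearMap.trace ℂ (G → V) T = ∑ x : G, if s x = x then LinearMap.trace ℂ V A else 0 := by
  let b := Module.finBasis ℂ V
  rw [LinearMap.trace_eq_matrix_trace ℂ (Pi.basis (fun _ : G => b)) T,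
    LinearMap.trace_eq_matrix_trace ℂ b A]
  simp only [Matrix.trace, Matrix.diag, LinearMap.toMatrix_apply, Fintype.sum_sigma]
  refine Finset.sum_congr rfl fun x _ => ?_
  split_ifs with h
  · refine Finset.sum_congr rfl fun i _ => ?_
    simp [Pi.basis_repr, hT, h, Pi.basis_apply]
  · refine Finset.sum_eq_zero fun i _ => ?_
    simp [Pi.basis_repr, hT, h, Pi.basis_apply]

def shiftRep {E G V : Type} [Group E] [Group G] [AddCommGroup V] [Module ℂ V]
    (φ : E →* G) (ρ : Representation ℂ E V) : Representation ℂ E (G → V) where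
  toFun h :=
    { toFun := fun f x => ρ h (f ((φ h)⁻¹ * x))
      map_add' := fun f f' => by ext x; simp
      map_smul' := fun c f => by ext x; simp }
  map_one' := by ext; simp
  map_mul' a b := by
    apply LinearMap.ext; intro f; funext x; simp [mul_assoc]

def transRep (G V : Type) [Group G] [AddCommGroup V] [Module ℂ V] :
    Representation ℂ G (G → V) where
  toFun g :=
    { toFun := fun f x => f (x * g)
      map_add' := fun f f' => by ext x; simp
      map_smul' := fun c f => by ext x; simp }
  map_one' := by apply LinearMap.ext; intro f; funext x; simp
  map_mul' a b := by
    apply LinearMap.ext; intro f; funext x; simp [mul_assoc]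

lemma IsCharX.ind {E G : Type} [Group E] [Fintype E] [Group G] [Fintype G] (φ : E →* G)
    {θ : E → ℂ} (h : IsCharX θ) : IsCharX (indX φ θ) := by
  obtain ⟨V, _, _, _, ρ, rfl⟩ := h
  let T := shiftRep φ ρ
  let R := transRep G V
  have hRT : ∀ g, ∀ f ∈ T.invariants, R g f ∈ T.invariants := by
    intro g f hf e
    have := hf e
    funext x
    have := congrFun this (x * g)
    simpa [T, R, shiftRep, transRep, mul_assoc] using this
  let σ : Representation ℂ G T.invariants :=
    { toFun := fun g => (R g).restrict (hRT g)
      map_one' := by apply LinearMap.ext; intro f; apply Subtype.ext; simp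
      map_mul' := fun a b => by apply LinearMap.ext; intro f; apply Subtype.ext; simp }
  refine ⟨T.invariants, inferInstance, inferInstance, inferInstance, σ, ?_⟩
  funext g
  have : Invertible (Fintype.card E : ℂ) := invertibleOfNonzero (by simp)
  let e : (G → V) →ₗ[ℂ] (G → V) := (Fintype.card E : ℂ)⁻¹ • ∑ h : E, T h
  have he1 : ∀ f, e f ∈ T.invariants := by
    intro f k
    simp only [e, LinearMap.smul_apply, map_smul, LinearMap.sum_apply, map_sum]
    congr 1
    simp only [← Module.End.mul_apply, ← map_mul]
    exact Fintype.sum_equiv (Equiv.mulLeft k) _ _ (fun _ => rfl)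
  have he2 : ∀ f ∈ T.invariants, e f = f := by
    intro f hf
    simp only [e, LinearMap.smul_apply, LinearMap.sum_apply, hf _]
    simp [← Nat.cast_smul_eq_nsmul ℂ]
  have key := LinearMap.trace_restrict_eq_of_forall_mem T.invariants (R g ∘ₗ e)
    (fun x => hRT g _ (he1 x))
  have h2 : (R g ∘ₗ e).restrict (fun x _ => hRT g _ (he1 x)) = σ g := by
    apply LinearMap.ext; intro f; apply Subtype.ext
    simp [σ, LinearMap.restrict_apply, he2 f.1 f.2]
  rw [h2] at key
  rw [Representation.character, key]
  have h3 : R g ∘ₗ e = (Fintype.card E : ℂ)⁻¹ • ∑ h : E, (R g ∘ₗ T h) := by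
    apply LinearMap.ext; intro f
    simp [e]
  rw [h3, map_smul, map_sum, smul_eq_mul, indX]
  congr 1
  rw [Finset.sum_comm]
  refine Finset.sum_congr rfl fun k _ => ?_
  rw [trace_shift (ρ k) (fun x => (φ k)⁻¹ * (x * g)) _ (fun f x => rfl)]
  refine Finset.sum_congr rfl fun x _ => ?_
  have : (φ k = x * g * x⁻¹) ↔ (φ k)⁻¹ * (x * g) = x := by
    rw [inv_mul_eq_iff_eq_mul, eq_mul_inv_iff_mul_eq, eq_comm]
  simp only [this]
  rfl

lemma isCharX_mem_aux {G : Type} [Group G] [Fintype G] (n : ℕ) :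
    ∀ (V : Type) [AddCommGroup V] [Module ℂ V] [FiniteDimensional ℂ V]
    (ρ : Representation ℂ G V), Module.finrank ℂ V = n →
    ρ.character ∈ AddSubmonoid.closure {f : G → ℂ | IsIrreducibleCharacter f} := by
  induction n using Nat.strong_induction_on with
  | _ n ih =>
  intro V _ _ _ ρ hn
  have : Invertible (Nat.card G : ℂ) := invertibleOfNonzero (by simp)
  by_cases hirr : ρ.IsIrreducible
  · apply AddSubmonoid.subset_closure
    refine ⟨FDRep.of ρ, ?_, rfl⟩
    rw [FDRep.simple_iff_char_is_norm_one]
    have := Representation.char_orthonormal ρ ρ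
    rw [if_pos ⟨Representation.Equiv.refl ρ⟩] at this
    rw [inv_mul_eq_one₀ (by simp)] at this
    exact this.symm
  by_cases hnt : Nontrivial V
  · have : Nontrivial (Subrepresentation ρ) := by
      refine ⟨⊥, ⊤, fun h => ?_⟩
      obtain ⟨v, hv⟩ := exists_ne (0 : V)
      have h1 : v ∈ (⊤ : Subrepresentation ρ).toSubmodule := trivial
      rw [← h] at h1
      exact hv ((Submodule.mem_bot ℂ).1 h1)
    have : ∃ a : Subrepresentation ρ, a ≠ ⊥ ∧ a ≠ ⊤ := by
      by_contra hc
      push Not at hc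
      exact hirr ⟨fun a => or_iff_not_imp_left.2 (hc a)⟩
    obtain ⟨a, ha, ha'⟩ := this
    obtain ⟨b, hab⟩ := exists_isCompl a
    have hc : IsCompl a.toSubmodule b.toSubmodule := by
      refine ⟨?_, ?_⟩
      · rw [disjoint_iff, ← Subrepresentation.toSubmodule_inf, hab.inf_eq_bot]; rfl
      · rw [codisjoint_iff, ← Subrepresentation.toSubmodule_sup, hab.sup_eq_top]; rfl
    have hd := Submodule.finrank_add_eq_of_isCompl hc
    have hapos : a.toSubmodule ≠ ⊥ := fun h => ha (Subrepresentation.toSubmodule_injective h)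
    have hane : a.toSubmodule ≠ ⊤ := fun h => ha' (Subrepresentation.toSubmodule_injective h)
    have h1 : Module.finrank ℂ a.toSubmodule ≠ 0 := fun h => hapos (Submodule.finrank_eq_zero.1 h)
    have h2 := Submodule.finrank_lt (lt_top_iff_ne_top.2 hane).ne
    have : ρ.character = a.toRepresentation.character + b.toRepresentation.character := by
      funext g
      let N : Fin 2 → Submodule ℂ V := ![a.toSubmodule, b.toSubmodule]
      have hN : DirectSum.IsInternal N := by
        rw [DirectSum.isInternal_submodule_iff_isCompl N (i := 0) (j := 1) (by simp)
          (by ext i; fin_cases i <;> simp)]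
        exact hc
      have := LinearMap.trace_eq_sum_trace_restrict hN (f := ρ g) (fun i => by
        fin_cases i
        · exact fun x hx => a.apply_mem_toSubmodule g hx
        · exact fun x hx => b.apply_mem_toSubmodule g hx)
      rw [Fin.sum_univ_two] at this
      exact this
    rw [this]
    exact add_mem (ih _ (by omega) _ _ rfl) (ih _ (by omega) _ _ rfl)
  · rw [not_nontrivial_iff_subsingleton] at hnt
    have : ρ.character = 0 := by
      funext g
      have : ρ g = 0 := Subsingleton.elim _ _
      simp [Representation.character, this]
    rw [this]; exact zero_mem _

lemma IsCharX.mem {G : Type} [Group G] [Fintype G] {f : G → ℂ} (h : IsCharX f) :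
    f ∈ AddSubmonoid.closure {f : G → ℂ | IsIrreducibleCharacter f} := by
  obtain ⟨V, _, _, _, ρ, rfl⟩ := h
  exact isCharX_mem_aux _ V ρ rfl

noncomputable def extX {G : Type} [Group G] (H : Subgroup G) (f : H → ℂ) (g : G) : ℂ :=
  if h : g ∈ H then f ⟨g, h⟩ else 0

lemma sum_subgroup_ite {G : Type} [Group G] (H : Subgroup G) [Fintype H] (f : H → ℂ) (g : G) :
    (∑ e : H, if H.subtype e = g then f e else 0) = extX H f g := by
  unfold extX
  split_ifs with h
  · rw [Finset.sum_eq_single ⟨g, h⟩]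
    · simp
    · intro b _ hb
      rw [if_neg]
      rintro rfl
      exact hb rfl
    · simp
  · refine Finset.sum_eq_zero fun e _ => ?_
    rw [if_neg]
    rintro rfl
    exact h e.2

lemma inducedChar_eq_indX {G : Type} [Group G] [Fintype G] (H : Subgroup G) [Fintype H]
    (f : H → ℂ) : inducedChar H f = indX H.subtype f := by
  funext g
  unfold inducedChar indX
  simp only [sum_subgroup_ite, extX]
  congr!

noncomputable def indHomX {E G : Type} [Group E] [Fintype E] [Group G] [Fintype G] (φ : E →* G) :
    (E → ℂ) →+ (G → ℂ) where
  toFun := indX φ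
  map_zero' := by funext g; simp [indX]
  map_add' a b := by
    funext g
    simp only [indX, Pi.add_apply, ← mul_add, ← Finset.sum_add_distrib]
    congr 1
    refine Finset.sum_congr rfl fun x _ => Finset.sum_congr rfl fun e _ => ?_
    split_ifs <;> simp

lemma indX_trans {E D G : Type} [Group E] [Fintype E] [Group D] [Fintype D] [Group G] [Fintype G]
    (φ : E →* D) (ψ : D →* G) (θ : E → ℂ) : indX ψ (indX φ θ) = indX (ψ.comp φ) θ := by
  funext g
  have h1 : ∀ y : D, ∑ x : G, ∑ d : D, ∑ e : E,
      (if ψ d = x * g * x⁻¹ then (if φ e = y * d * y⁻¹ then θ e else 0) else 0) =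
      ∑ x : G, ∑ e : E, if ψ (φ e) = x * g * x⁻¹ then θ e else 0 := by
    intro y
    refine Fintype.sum_equiv (Equiv.mulLeft (ψ y)) _ _ fun x => ?_
    rw [Finset.sum_comm]
    refine Finset.sum_congr rfl fun e _ => ?_
    rw [Finset.sum_eq_single (y⁻¹ * φ e * y)]
    · have : (ψ (y⁻¹ * φ e * y) = x * g * x⁻¹) ↔
          ψ (φ e) = (Equiv.mulLeft (ψ y) x) * g * (Equiv.mulLeft (ψ y) x)⁻¹ := by
        simp only [map_mul, map_inv, Equiv.coe_mulLeft, mul_inv_rev]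
        constructor
        · intro h
          rw [show ψ y * x * g * (x⁻¹ * (ψ y)⁻¹) = ψ y * (x * g * x⁻¹) * (ψ y)⁻¹ by group, ← h]
          group
        · intro h
          rw [h]; group
      simp only [this]
      rw [if_pos (show φ e = y * (y⁻¹ * φ e * y) * y⁻¹ by group)]
    · intro d _ hd
      rw [if_neg (show ¬ φ e = y * d * y⁻¹ from fun h => hd (by rw [h]; group)), ite_self]
    · simp
  have h2 : ∑ x : G, ∑ d : D, (if ψ d = x * g * x⁻¹ then indX φ θ d else 0) =
      (Fintype.card E : ℂ)⁻¹ * ∑ y : D, ∑ x : G, ∑ d : D, ∑ e : E,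
      (if ψ d = x * g * x⁻¹ then (if φ e = y * d * y⁻¹ then θ e else 0) else 0) := by
    conv_rhs => rw [Finset.sum_comm, Finset.mul_sum]
    refine Finset.sum_congr rfl fun x _ => ?_
    conv_rhs => rw [Finset.sum_comm, Finset.mul_sum]
    refine Finset.sum_congr rfl fun d _ => ?_
    split_ifs with h
    · simp [indX]
    · simp
  rw [indX, h2]
  simp only [h1]
  rw [Finset.sum_const, nsmul_eq_mul, Finset.card_univ, indX]
  have : (Fintype.card D : ℂ) ≠ 0 := by simp
  field_simp
  rfl

lemma orbit_sumX {K X : Type} [Group K] [Fintype K] [Fintype X] [MulAction K X] (x0 : X)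
    (f : X → ℂ) [Fintype (MulAction.stabilizer K x0)] :
    (∑ x with x ∈ MulAction.orbit K x0, f x) =
      (Fintype.card (MulAction.stabilizer K x0) : ℂ)⁻¹ * ∑ k : K, f (k • x0) := by
  have hc : (Fintype.card (MulAction.stabilizer K x0) : ℂ) ≠ 0 :=
    Nat.cast_ne_zero.2 Fintype.card_ne_zero
  rw [eq_inv_mul_iff_mul_eq₀ hc, Finset.mul_sum]
  rw [← Finset.sum_fiberwise_of_maps_to (s := Finset.univ)
    (t := Finset.univ.filter (fun x => x ∈ MulAction.orbit K x0)) (g := fun k : K => k • x0)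
    (fun k _ => by simp)]
  refine Finset.sum_congr rfl fun x hx => ?_
  simp only [Finset.mem_filter, Finset.mem_univ, true_and] at hx
  obtain ⟨k0, rfl⟩ := hx
  rw [Finset.sum_congr rfl (g := fun _ => f (k0 • x0))
    (fun k hk => by rw [(Finset.mem_filter.1 hk).2]), Finset.sum_const, nsmul_eq_mul]
  congr 2
  rw [← Finset.card_univ]
  refine Finset.card_bij (fun s _ => k0 * s.1) ?_ ?_ ?_
  · intro s _
    have := MulAction.mem_stabilizer_iff.1 s.2
    simp [mul_smul, this]
  · intro a _ b _ h
    exact Subtype.ext (mul_left_cancel h)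
  · intro k hk
    refine ⟨⟨k0⁻¹ * k, ?_⟩, Finset.mem_univ _, by simp⟩
    simp only [Finset.mem_filter, Finset.mem_univ, true_and] at hk
    rw [MulAction.mem_stabilizer_iff, mul_smul, hk, inv_smul_smul]

lemma coset_sumX {G : Type} [Group G] [Fintype G] (H : Subgroup G) [Fintype H] [Fintype (G ⧸ H)]
    (f : G ⧸ H → ℂ) :
    (∑ c, f c) = (Fintype.card H : ℂ)⁻¹ * ∑ x : G, f (x : G ⧸ H) := by
  have := orbit_sumX (K := G) ((1 : G) : G ⧸ H) f
  have h0 : ∀ x ∈ (Finset.univ : Finset (G ⧸ H)), x ∈ MulAction.orbit G ((1 : G) : G ⧸ H) :=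
    fun x _ => MulAction.exists_smul_eq G _ x
  rw [Finset.filter_true_of_mem h0] at this
  rw [this]
  congr 2
  · rw [← Nat.card_eq_fintype_card, ← Nat.card_eq_fintype_card, MulAction.stabilizer_quotient]
  · simp

lemma orbit_decompX {K X : Type} [Group K] [Fintype K] [Fintype X] [MulAction K X]
    (F : X → K → ℂ) (hF : ∀ k x g, F (k • x) (k * g * k⁻¹) = F x g) (g : K) :
    (∑ x : X, if g • x = x then F x g else 0) =
      ∑ ω : MulAction.orbitRel.Quotient K X,
        indX (MulAction.stabilizer K ω.out).subtype (fun s => F ω.out s) g := by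
  rw [← Finset.sum_fiberwise Finset.univ
    (fun x => (Quotient.mk (MulAction.orbitRel K X) x : MulAction.orbitRel.Quotient K X))]
  refine Finset.sum_congr rfl fun ω _ => ?_
  have h1 : (Finset.univ.filter
      fun x => (Quotient.mk (MulAction.orbitRel K X) x : MulAction.orbitRel.Quotient K X) = ω) =
      Finset.univ.filter (fun x => x ∈ MulAction.orbit K ω.out) := by
    ext x
    simp only [Finset.mem_filter, Finset.mem_univ, true_and]
    rw [← MulAction.orbitRel_apply]
    conv_lhs => rw [← Quotient.out_eq ω]
    exact Quotient.eq
  rw [h1, orbit_sumX, indX]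
  congr 1
  refine Fintype.sum_equiv (Equiv.inv K) _ _ fun k => ?_
  rw [sum_subgroup_ite (MulAction.stabilizer K ω.out) (fun s => F ω.out s)]
  simp only [extX, Equiv.inv_apply, inv_inv, MulAction.mem_stabilizer_iff]
  have h2 : g • k • ω.out = k • ω.out ↔ (k⁻¹ * g * k) • ω.out = ω.out := by
    rw [mul_smul, mul_smul, inv_smul_eq_iff]
  have h3 : F (k • ω.out) g = F ω.out (k⁻¹ * g * k) := by
    rw [← hF k ω.out]; congr 1; group
  simp only [h2, h3]
  rfl

lemma mackeyX {K G : Type} [Group K] [Fintype K] [Group G] [Fintype G] (H : Subgroup G)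
    (φ : K →* G) (hφ : Function.Injective φ) (ψ : H → ℂ) (hψ : IsCharX ψ) :
    ∃ (Ω : Type) (_ : Fintype Ω) (D : Ω → Subgroup K) (α : ∀ ω, D ω →* H),
      (∀ ω, Function.Injective (α ω)) ∧
      ∀ k, indX H.subtype ψ (φ k) = ∑ ω, indX (D ω).subtype (fun d => ψ (α ω d)) k := by
  let _ : MulAction K (G ⧸ H) := MulAction.compHom (G ⧸ H) φ
  have hsm : ∀ (k : K) (x : G), k • (x : G ⧸ H) = ((φ k * x : G) : G ⧸ H) := fun k x => rfl
  have hext : ∀ (h g : G), h ∈ H → extX H ψ (h * g * h⁻¹) = extX H ψ g := by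
    intro h g hh
    unfold extX
    by_cases hg : g ∈ H
    · rw [dif_pos hg, dif_pos (H.mul_mem (H.mul_mem hh hg) (H.inv_mem hh))]
      exact hψ.conj ⟨h, hh⟩ ⟨g, hg⟩
    · rw [dif_neg hg, dif_neg]
      rwa [H.mul_mem_cancel_right (H.inv_mem hh), H.mul_mem_cancel_left hh]
  let F : G ⧸ H → K → ℂ := fun c k => extX H ψ (c.out⁻¹ * φ k * c.out)
  have hF1 : ∀ (x : G) k, F (x : G ⧸ H) k = extX H ψ (x⁻¹ * φ k * x) := by
    intro x k
    obtain ⟨h, hh⟩ := QuotientGroup.mk_out_eq_mul H x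
    simp only [F, hh]
    rw [← hext h _ h.2]
    congr 1
    group
  have hF : ∀ k x g, F (k • x) (k * g * k⁻¹) = F x g := by
    intro k x g
    induction x using QuotientGroup.induction_on with
    | H x =>
    rw [hsm, hF1, hF1]
    congr 1
    simp only [map_mul, map_inv]
    group
  have hst : ∀ (k : K) (c : G ⧸ H), k • c = c ↔ c.out⁻¹ * φ k * c.out ∈ H := by
    intro k c
    conv_lhs => rw [← QuotientGroup.out_eq' c, hsm, eq_comm, QuotientGroup.eq]
    rw [mul_assoc]
  refine ⟨MulAction.orbitRel.Quotient K (G ⧸ H), inferInstance,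
    fun ω => MulAction.stabilizer K ω.out, fun ω => MonoidHom.mk'
      (fun s => ⟨ω.out.out⁻¹ * φ s * ω.out.out, (hst _ _).1 s.2⟩) ?_, ?_, ?_⟩
  · intro a b
    apply Subtype.ext
    simp only [Subgroup.coe_mul, map_mul]
    group
  · intro ω a b hab
    have := congrArg Subtype.val hab
    simp only [MonoidHom.mk'_apply] at this
    exact Subtype.ext (hφ (mul_left_cancel (mul_right_cancel this)))
  · intro k
    have h1 : indX H.subtype ψ (φ k) = ∑ c : G ⧸ H, F c k := by
      rw [coset_sumX, indX]
      congr 1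
      refine Fintype.sum_equiv (Equiv.inv G) _ _ fun x => ?_
      rw [sum_subgroup_ite, hF1]
      simp
    have h2 := orbit_decompX F hF k
    have h3 : ∀ c : G ⧸ H, ¬ (k • c = c) → F c k = 0 := by
      intro c h
      rw [hst] at h
      simp only [F, extX, dif_neg h]
    have h4 : ∀ c : G ⧸ H, (@ite ℂ (k • c = c) (Classical.propDecidable _) (F c k) 0) = F c k := by
      intro c
      split_ifs with h
      · rfl
      · exact (h3 c h).symm
    rw [Finset.sum_congr rfl fun c _ => h4 c] at h2
    refine (h1.trans h2).trans ?_
    refine Finset.sum_congr rfl fun ω _ => ?_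
    congr 1
    funext s
    simp only [F, extX]
    rw [dif_pos ((hst _ _).1 s.2)]
    rfl

def goodX {P : Type} [Group P] [Fintype P] (N : ℕ) : AddSubmonoid (P → ℂ) :=
  AddSubmonoid.closure {f | ∃ (Q : Subgroup P) (lam : Q → ℂ), IsIrreducibleCharacter lam ∧
    Nat.card Q = N ∧ f = inducedChar Q lam}

lemma indX_good {E P : Type} [Group E] [Fintype E] [Group P] [Fintype P] (p : ℕ) [Fact p.Prime]
    (φ : E →* P) (hφ : Function.Injective φ) (k m : ℕ) (hE : Nat.card E = p ^ k) (hkm : k ≤ m)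
    (hP : p ^ m ∣ Nat.card P) (θ : E → ℂ) (hθ : IsCharX θ) : indX φ θ ∈ goodX (P := P) (p ^ m) := by
  obtain ⟨Q, hQ, hle⟩ := Sylow.exists_subgroup_card_pow_prime_le p hP φ.range
    (by rw [← hE]; exact (Nat.card_congr (MonoidHom.ofInjective hφ).toEquiv).symm) hkm
  let φ' : E →* Q := φ.codRestrict Q (fun e => hle ⟨e, rfl⟩)
  have h1 : indX φ θ = indHomX Q.subtype (indX φ' θ) := (indX_trans φ' Q.subtype θ).symm
  rw [h1]
  have h2 := (hθ.ind φ').mem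
  generalize indX φ' θ = f0 at h2
  induction h2 using AddSubmonoid.closure_induction with
  | mem f hf => exact AddSubmonoid.subset_closure ⟨Q, f, hf, hQ, (inducedChar_eq_indX Q f).symm⟩
  | zero => rw [map_zero]; exact zero_mem _
  | add a b _ _ ha hb => rw [map_add]; exact add_mem ha hb

lemma goodX_extract {P : Type} [Group P] [Fintype P] (N : ℕ) (f : P → ℂ)
    (hf : f ∈ goodX (P := P) N) :
    ∃ (n : ℕ) (Q : Fin n → Subgroup P) (lam : (i : Fin n) → ↥(Q i) → ℂ),
      (∀ i, IsIrreducibleCharacter (lam i)) ∧ (∀ i, Nat.card (Q i) = N) ∧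
      (∀ x : P, f x = ∑ i, inducedChar (Q i) (lam i) x) := by
  obtain ⟨l, hl, rfl⟩ := AddSubmonoid.exists_list_of_mem_closure hf
  choose! Q lam h1 h2 h3 using hl
  refine ⟨l.length, fun i => Q l[i], fun i => lam l[i], fun i => h1 _ (by simp),
    fun i => h2 _ (by simp), fun x => ?_⟩
  have : l.sum = ∑ i : Fin l.length, l[i] := by
    simp
  rw [this, Finset.sum_apply]
  refine Finset.sum_congr rfl fun i _ => ?_
  rw [← h3 _ (by simp)]

theorem imprimitive_reduction
    (p : ℕ) [Fact p.Prime] (G : Type) [Group G] [Fintype G]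
    (P : Sylow p G) (V : FDRep ℂ G) (hV : CategoryTheory.Simple V)
    -- `χ = V.character` is imprimitive: induced from a proper subgroup.
    (himpr : ∃ (H : Subgroup G), H ≠ ⊤ ∧ ∃ (ψ : ↥H → ℂ),
      IsIrreducibleCharacter ψ ∧ ∀ g : G, V.character g = inducedChar H ψ g)
    -- the conclusion of the theorem holds for all proper subgroups of `G`:
    (hsub : ∀ (K : Subgroup G), K ≠ ⊤ → ∀ (S : Sylow p ↥K) (W : FDRep ℂ ↥K),
      CategoryTheory.Simple W →
        SumInducedProperty p (S : Subgroup ↥K) W.character (Module.finrank ℂ W)) :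
    SumInducedProperty p (P : Subgroup G) V.character (Module.finrank ℂ V) := by
  have hp : p.Prime := Fact.out
  obtain ⟨H, hH, ψ, ⟨W, hW, rfl⟩, hVψ⟩ := himpr
  have hψ : IsCharX W.character := IsIrreducibleCharacter.isCharX ⟨W, hW, rfl⟩
  have hcP : Nat.card P = p ^ (Nat.card G).factorization p := P.card_eq_multiplicity
  -- degrees
  have hdeg : Nat.card H * Module.finrank ℂ V = Nat.card G * Module.finrank ℂ W := by
    have h1 := hVψ 1
    rw [FDRep.char_one, inducedChar] at h1
    have h2 : ∀ x : G, (if h : x * 1 * x⁻¹ ∈ H then W.character ⟨x * 1 * x⁻¹, h⟩ else 0) =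
        (Module.finrank ℂ W : ℂ) := by
      intro x
      have h3 : x * 1 * x⁻¹ = 1 := by simp
      rw [dif_pos (by rw [h3]; exact H.one_mem), ← FDRep.char_one W]
      congr 1
      exact Subtype.ext h3
    rw [Finset.sum_congr rfl fun x _ => h2 x, Finset.sum_const, nsmul_eq_mul, Finset.card_univ,
      eq_inv_mul_iff_mul_eq₀ (by simp)] at h1
    rw [Nat.card_eq_fintype_card, Nat.card_eq_fintype_card]
    exact_mod_cast h1
  have hV0 : Module.finrank ℂ V ≠ 0 := by
    intro h0
    have hnorm := (FDRep.simple_iff_char_is_norm_one V).1 hV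
    have : Subsingleton V := Module.finrank_zero_iff.1 h0
    have h1 : ∀ g, V.character g = 0 := by
      intro g
      have : V.ρ g = 0 := Subsingleton.elim _ _
      simp [FDRep.character, this]
    simp only [h1, mul_zero, Finset.sum_const_zero] at hnorm
    exact Nat.card_pos.ne' (Nat.cast_eq_zero.1 hnorm.symm)
  have hW0 : Module.finrank ℂ W ≠ 0 := by
    rintro h0
    rw [h0, mul_zero] at hdeg
    exact (mul_ne_zero Nat.card_pos.ne' hV0) hdeg
  set a := (Nat.card G).factorization p with ha
  set b := (Nat.card H).factorization p with hb
  set v := (Module.finrank ℂ V).factorization p with hv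
  set w := (Module.finrank ℂ W).factorization p with hw
  have hval : b + v = a + w := by
    have := congrArg (fun n => n.factorization p) hdeg
    simp only [Nat.factorization_mul Nat.card_pos.ne' hV0,
      Nat.factorization_mul Nat.card_pos.ne' hW0] at this
    exact this
  -- Mackey
  obtain ⟨Ω, _, D, α, hα, hmk⟩ := mackeyX H (P : Subgroup G).subtype
    (Subgroup.subtype_injective _) W.character hψ
  have hcS : ∀ S : Sylow p H, Nat.card (S : Subgroup H) = p ^ b := fun S => S.card_eq_multiplicity
  have hwb : w ≤ b := by
    obtain ⟨S⟩ : Nonempty (Sylow p H) := inferInstance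
    obtain ⟨n, R, μ, -, hidx, hsum⟩ := hsub H hH S W hW
    rcases Nat.eq_zero_or_pos n with rfl | hn
    · have := hsum 1
      simp only [OneMemClass.coe_one, FDRep.char_one, Finset.univ_eq_empty,
        Finset.sum_empty, Nat.cast_eq_zero] at this
      exact absurd this hW0
    · have h1 := (R ⟨0, hn⟩).index_dvd_card
      rw [← hidx ⟨0, hn⟩, hcS S] at h1
      exact (Nat.pow_dvd_pow_iff_le_right hp.one_lt).1 h1
  have hva : v ≤ a := by omega
  have main : (fun x : P => V.character x) ∈ goodX (P := P) (p ^ (a - v)) := by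
    have h1 : (fun x : P => V.character x) =
        ∑ ω, indX (D ω).subtype (fun d => W.character (α ω d)) := by
      funext x
      rw [hVψ, inducedChar_eq_indX, Finset.sum_apply]
      exact hmk x
    rw [h1]
    refine sum_mem fun ω _ => ?_
    have hDp : IsPGroup p (α ω).range :=
      ((P.isPGroup'.to_subgroup (D ω)).of_equiv (MonoidHom.ofInjective (hα ω)))
    obtain ⟨S, hS⟩ := hDp.exists_le_sylow
    obtain ⟨n, R, μ, hμ, hidx, hsum⟩ := hsub H hH S W hW
    let β : D ω →* (S : Subgroup H) := (α ω).codRestrict S (fun d => hS ⟨d, rfl⟩)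
    have hβ : Function.Injective β := fun x y hxy => hα ω (congrArg Subtype.val hxy)
    have h2 : (fun d => W.character (α ω d)) =
        ∑ i, fun d => indX (R i).subtype (μ i) (β d) := by
      funext d
      rw [Finset.sum_apply]
      refine (hsum (β d)).trans (Finset.sum_congr rfl fun i _ => ?_)
      rw [inducedChar_eq_indX]
    rw [h2]
    change indHomX _ _ ∈ _
    rw [map_sum]
    refine sum_mem fun i _ => ?_
    have hR : Nat.card (R i) = p ^ (b - w) := by
      have h3 := (R i).card_mul_index
      rw [← hidx i, hcS S] at h3
      refine Nat.eq_of_mul_eq_mul_right (pow_pos hp.pos w) (h3.trans ?_)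
      rw [← pow_add, Nat.sub_add_cancel hwb]
    obtain ⟨Ω', _, D', α', hα', hmk'⟩ := mackeyX (R i) β hβ (μ i) (hμ i).isCharX
    have h4 : (fun d => indX (R i).subtype (μ i) (β d)) =
        ∑ ω', indX (D' ω').subtype (fun d => μ i (α' ω' d)) := by
      funext d
      rw [Finset.sum_apply]
      exact hmk' d
    rw [h4, map_sum]
    refine sum_mem fun ω' _ => ?_
    change indX _ (indX _ _) ∈ _
    rw [indX_trans]
    have hdvd : Nat.card (D' ω') ∣ p ^ (b - w) := by
      rw [← hR]
      exact Subgroup.card_dvd_of_injective _ (hα' ω')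
    obtain ⟨k, hk, hk'⟩ := (Nat.dvd_prime_pow hp).1 hdvd
    refine indX_good p _ ?_ k (a - v) hk' (by omega) ?_ _ ((hμ i).isCharX.comp (α' ω'))
    · exact (Subgroup.subtype_injective _).comp (Subgroup.subtype_injective _)
    · rw [hcP]
      exact pow_dvd_pow p (Nat.sub_le a v)
  obtain ⟨n, Q, lam, h1, h2, h3⟩ := goodX_extract _ _ main
  refine ⟨n, Q, lam, h1, fun i => ?_, h3⟩
  have h4 := (Q i).card_mul_index
  rw [h2 i, hcP] at h4
  refine Nat.eq_of_mul_eq_mul_left (pow_pos hp.pos (a - v)) (Eq.trans ?_ h4.symm)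
  rw [← hv, ← pow_add, Nat.sub_add_cancel hva]
end

section
/- Let p be a prime, G a finite group, and N a normal subgroup of G such that p does not divide the index |G : N|. Let P be a Sylow p-subgroup of G (so that P ≤ N and P is a Sylow p-subgroup of N). Assume that for every irreducible character ψ of N, the restriction ψ_P is a sum of characters of the form λ^P induced from irreducible characters λ of subgroups Q ≤ P with ψ(1)_p = |P : Q|. Then for every irreducible character χ of G, the restriction χ_P is a sum of characters of the form λ^P induced from irreducible characters λ of subgroups Q ≤ P with χ(1)_p = |P : Q|. -/
open scoped Classical

theorem aux_trace_integral {E : Type*} [AddCommGroup E] [Module ℂ E] [FiniteDimensional ℂ E]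
    (u : Module.End ℂ E) (k : ℕ) (hk : 0 < k) (hu : u ^ k = 1) :
    IsIntegral ℤ (LinearMap.trace ℂ E u) := by
  rw [Module.End.trace_eq_sum_roots_charpoly_of_splits (IsAlgClosed.splits _)]
  refine IsIntegral.multiset_sum ?_
  intro μ hμ
  have h1 : u.HasEigenvalue μ := by
    rw [Module.End.hasEigenvalue_iff_isRoot_charpoly]
    exact (Polynomial.mem_roots'.1 hμ).2
  obtain ⟨v, hv⟩ := h1.exists_hasEigenvector
  have h2 := hv.pow_apply k
  rw [hu] at h2
  have h3 : μ ^ k = 1 := by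
    have : (μ ^ k - 1) • v = 0 := by
      rw [sub_smul, ← h2]; simp
    rcases smul_eq_zero.1 this with h | h
    · exact sub_eq_zero.1 h
    · exact absurd h hv.2
  exact IsIntegral.of_pow hk (h3 ▸ isIntegral_one)

theorem aux_scalar_integral {E : Type*} [AddCommGroup E] [Module ℂ E] [FiniteDimensional ℂ E]
    [Nontrivial E] (S : Submonoid (Module.End ℂ E)) (hS : (S : Set (Module.End ℂ E)).Finite)
    {ι : Type*} (s : Finset ι) (t : ι → ℂ) (u : ι → Module.End ℂ E) (ht : ∀ i, IsIntegral ℤ (t i))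
    (hu : ∀ i ∈ s, u i ∈ S) (c : ℂ) (hc : c • (1 : Module.End ℂ E) = ∑ i ∈ s, t i • u i) :
    IsIntegral ℤ c := by
  let O := integralClosure ℤ ℂ
  let L : Submodule O (Module.End ℂ E) := Submodule.span O (S : Set (Module.End ℂ E))
  have hLfg : L.FG := Submodule.fg_span hS
  have key : IsIntegral O c := by
    refine isIntegral_of_smul_mem_submodule (M := Module.End ℂ E) L ?_ hLfg c ?_
    · intro h
      have : (1 : Module.End ℂ E) ∈ L := Submodule.subset_span S.one_mem
      rw [h] at this
      exact one_ne_zero ((Submodule.mem_bot _).1 this)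
    · intro n hn
      have : c • n = (c • (1 : Module.End ℂ E)) * n := by simp
      rw [this, hc]
      clear this
      refine Submodule.span_induction ?_ ?_ ?_ ?_ hn
      · intro x hx
        rw [Finset.sum_mul]
        refine Submodule.sum_mem _ fun i hi => ?_
        rw [smul_mul_assoc]
        exact L.smul_mem (⟨t i, ht i⟩ : O) (Submodule.subset_span (S.mul_mem (hu i hi) hx))
      · simp
      · intro x y _ _ hx hy
        rw [mul_add]; exact L.add_mem hx hy
      · intro a x _ hx
        have : (∑ i ∈ s, t i • u i) * a • x = a • ((∑ i ∈ s, t i • u i) * x) := by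
          rw [mul_smul_comm]
        rw [this]; exact L.smul_mem _ hx
  exact isIntegral_trans (R := ℤ) (A := O) c key

theorem aux_finord {E : Type*} [Monoid E] (S : Submonoid E) (hS : (S : Set E).Finite) (u v : E)
    (hu : u ∈ S) (h : v * u = 1) (h' : u * v = 1) : ∃ k, 0 < k ∧ v ^ k = 1 := by
  have : ∃ a b, a < b ∧ u ^ a = u ^ b := by
    have := hS.to_subtype
    obtain ⟨a, b, hab, h⟩ := Finite.exists_ne_map_eq_of_infinite (fun n : ℕ => (⟨u ^ n, S.pow_mem hu n⟩ : (S : Set E)))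
    simp only [Subtype.mk.injEq] at h
    rcases lt_or_gt_of_ne hab with h1 | h1
    · exact ⟨a, b, h1, h⟩
    · exact ⟨b, a, h1, h.symm⟩
  obtain ⟨a, b, hab, he⟩ := this
  obtain ⟨k, rfl⟩ := Nat.exists_eq_add_of_lt hab
  let U : Eˣ := ⟨u, v, h', h⟩
  refine ⟨k + 1, by omega, ?_⟩
  have h3 : U ^ a = U ^ (a + k + 1) := by
    ext; simpa [U] using he
  have h4 : U ^ (k+1) = 1 := by
    rw [add_assoc, pow_add] at h3
    exact (left_eq_mul.1 h3)
  have h5 : (U⁻¹) ^ (k+1) = 1 := by rw [inv_pow, h4, inv_one]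
  simpa [U] using congrArg Units.val h5

theorem aux_trace_hom {V W : Type*} [AddCommGroup V] [Module ℂ V] [FiniteDimensional ℂ V]
   [AddCommGroup W] [Module ℂ W] [FiniteDimensional ℂ W] (a : V →ₗ[ℂ] V) (b : W →ₗ[ℂ] W)
   (F : Module.End ℂ (W →ₗ[ℂ] V)) (hF : ∀ φ, F φ = a ∘ₗ φ ∘ₗ b) :
   LinearMap.trace ℂ _ F = LinearMap.trace ℂ _ a * LinearMap.trace ℂ _ b := by
  have : F = (dualTensorHomEquiv ℂ W V).conj (TensorProduct.map (Module.Dual.transpose (R := ℂ) b) a) := by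
    rw [LinearEquiv.conj_apply]
    refine LinearMap.ext fun φ => ?_
    obtain ⟨x, rfl⟩ := (dualTensorHomEquiv ℂ W V).surjective φ
    rw [hF]
    induction x with
    | zero => simp
    | tmul f v => ext w; simp [Module.Dual.transpose]
    | add x y hx hy => simp only [map_add, LinearMap.add_comp, LinearMap.comp_add, hx, hy]
  rw [this, LinearMap.trace_conj', LinearMap.trace_tensorProduct', LinearMap.trace_transpose', mul_comm]

set_option linter.all false

def AuxIrr {H V : Type*} [Group H] [AddCommGroup V] [Module ℂ V] (ρ : Representation ℂ H V) : Prop :=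
  Nontrivial V ∧ ∀ U : Submodule ℂ V, (∀ g, ∀ v ∈ U, ρ g v ∈ U) → U = ⊥ ∨ U = ⊤

theorem aux_schur {H V W : Type*} [Group H] [AddCommGroup V] [Module ℂ V] [AddCommGroup W]
    [Module ℂ W] (ρ : Representation ℂ H V) (τ : Representation ℂ H W) (hρ : AuxIrr ρ)
    (hτ : AuxIrr τ) (α : H ≃ H) (f : V →ₗ[ℂ] W) (hf : ∀ n v, f (ρ n v) = τ (α n) (f v))
    (h0 : f ≠ 0) : Function.Bijective f := by
  constructor
  · rw [← LinearMap.ker_eq_bot]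
    rcases hρ.2 (LinearMap.ker f) (fun g v hv => by
      rw [LinearMap.mem_ker] at hv ⊢; rw [hf, hv, map_zero]) with h | h
    · exact h
    · exact absurd (LinearMap.ker_eq_top.1 h) h0
  · rw [← LinearMap.range_eq_top]
    rcases hτ.2 (LinearMap.range f) (fun g v hv => by
      obtain ⟨w, rfl⟩ := hv
      exact ⟨ρ (α.symm g) w, by rw [hf]; simp⟩) with h | h
    · exact absurd (LinearMap.range_eq_bot.1 h) h0
    · exact h

theorem aux_schur_scalar {H V : Type*} [Group H] [AddCommGroup V] [Module ℂ V]
    [FiniteDimensional ℂ V] (ρ : Representation ℂ H V) (hρ : AuxIrr ρ)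
    (f : V →ₗ[ℂ] V) (hf : ∀ n v, f (ρ n v) = ρ n (f v)) :
    ∃ c : ℂ, f = c • LinearMap.id := by
  have := hρ.1
  obtain ⟨c, hc⟩ := Module.End.exists_eigenvalue f
  refine ⟨c, ?_⟩
  rcases hρ.2 (Module.End.eigenspace f c) (fun g v hv => by
    rw [Module.End.mem_eigenspace_iff] at hv ⊢; rw [hf, hv, map_smul]) with h | h
  · exact absurd h hc
  · ext v
    have : v ∈ Module.End.eigenspace f c := by rw [h]; trivial
    simpa [Module.End.mem_eigenspace_iff] using this

section
variable {G V W : Type*} [Group G] [Fintype G] {N : Subgroup G} [Fintype N] [N.Normal]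
  [AddCommGroup V] [Module ℂ V] [AddCommGroup W] [Module ℂ W]
  (σ : Representation ℂ G V) (ρ : Representation ℂ N W)

def auxHom : Submodule ℂ (W →ₗ[ℂ] V) where
  carrier := {φ | ∀ (n : N) w, φ (ρ n w) = σ n (φ w)}
  add_mem' := by
    intro a b ha hb n w
    simp [ha n w, hb n w]
  zero_mem' := by intro n w; simp
  smul_mem' := by
    intro c a ha n w
    simp [ha n w]

/-- `A` intertwines the `g`-twist. -/
def AuxTw (g : G) (A : W →ₗ[ℂ] W) : Prop :=
  ∀ (m : N) w, A (ρ (MulAut.conjNormal g m) w) = ρ m (A w)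

def auxOp (g : G) (A : W →ₗ[ℂ] W) (hA : AuxTw ρ g A) : Module.End ℂ (auxHom σ ρ) where
  toFun φ := ⟨σ g ∘ₗ φ.1 ∘ₗ A, by
    intro n w
    have h1 := hA (MulAut.conjNormal g⁻¹ n) w
    have h2 : MulAut.conjNormal g (MulAut.conjNormal g⁻¹ n) = n := by
      ext; simp [mul_assoc]
    rw [h2] at h1
    simp only [LinearMap.comp_apply, h1]
    rw [φ.2 (MulAut.conjNormal g⁻¹ n)]
    rw [← Module.End.mul_apply, ← map_mul, ← Module.End.mul_apply, ← map_mul]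
    congr 2
    simp [mul_assoc]⟩
  map_add' φ ψ := by ext; simp
  map_smul' c φ := by ext; simp

theorem auxOp_apply (g : G) (A : W →ₗ[ℂ] W) (hA : AuxTw ρ g A) (φ : auxHom σ ρ) (w : W) :
    (auxOp σ ρ g A hA φ).1 w = σ g (φ.1 (A w)) := rfl

def auxS : Submonoid (Module.End ℂ (auxHom σ ρ)) where
  carrier := {u | LinearMap.det u = 1 ∧ ∃ g A, ∃ hA : AuxTw ρ g A, u = auxOp σ ρ g A hA}
  one_mem' := by
    refine ⟨by simp, 1, LinearMap.id, fun m w => by simp, ?_⟩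
    ext φ w
    refine Eq.trans ?_ (auxOp_apply σ ρ _ _ _ φ w).symm
    simp
  mul_mem' := by
    rintro a b ⟨ha, g, A, hA, rfl⟩ ⟨hb, h, B, hB, rfl⟩
    refine ⟨by rw [map_mul, ha, hb, one_mul], g * h, B ∘ₗ A, fun m w => ?_, ?_⟩
    · rw [map_mul]
      simp only [LinearMap.comp_apply, MulAut.mul_apply]
      rw [hA, hB]
    · ext φ w
      refine Eq.trans ?_ (auxOp_apply σ ρ _ _ _ φ w).symm
      simp [auxOp_apply]

variable [FiniteDimensional ℂ W] [FiniteDimensional ℂ V]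

theorem auxTw_bij (hρ : AuxIrr ρ) (g : G) (A : W →ₗ[ℂ] W) (hA : AuxTw ρ g A) (h0 : A ≠ 0) :
    Function.Bijective A :=
  aux_schur ρ ρ hρ hρ (MulAut.conjNormal g⁻¹ : MulAut N).toEquiv A (fun n v => by
    have := hA (MulAut.conjNormal g⁻¹ n) v
    have h2 : MulAut.conjNormal g (MulAut.conjNormal g⁻¹ n) = n := by
      ext; simp [mul_assoc]
    rw [h2] at this
    exact this) h0

theorem auxS_finite (hρ : AuxIrr ρ) (hE : Nontrivial (auxHom σ ρ)) :
    (auxS σ ρ : Set (Module.End ℂ (auxHom σ ρ))).Finite := by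
  have hsub : (auxS σ ρ : Set (Module.End ℂ (auxHom σ ρ))) ⊆
      ⋃ g : G, {u | LinearMap.det u = 1 ∧ ∃ A, ∃ hA : AuxTw ρ g A, u = auxOp σ ρ g A hA} := by
    rintro u ⟨h, g, A, hA, hu⟩
    exact Set.mem_iUnion.2 ⟨g, h, A, hA, hu⟩
  refine (Set.finite_iUnion fun g => ?_).subset hsub
  by_cases hne : ∃ u, u ∈ {u | LinearMap.det u = 1 ∧ ∃ A, ∃ hA : AuxTw ρ g A, u = auxOp σ ρ g A hA}
  swap
  · rw [Set.eq_empty_of_forall_notMem fun u hu => hne ⟨u, hu⟩]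
    exact Set.finite_empty
  obtain ⟨u0, hd0, A0, hA0, rfl⟩ := hne
  have hepos : 0 < Module.finrank ℂ (auxHom σ ρ) := Module.finrank_pos
  have hA0ne : A0 ≠ 0 := by
    rintro rfl
    have : auxOp σ ρ g 0 hA0 = 0 := by ext; simp [auxOp_apply]
    rw [this, LinearMap.det_zero, zero_pow hepos.ne'] at hd0
    exact zero_ne_one hd0
  have hfin : {c : ℂ | c ^ Module.finrank ℂ (auxHom σ ρ) = 1}.Finite := by
    refine (Polynomial.nthRootsFinset (Module.finrank ℂ (auxHom σ ρ)) (1 : ℂ)).finite_toSet.subset ?_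
    intro c hc
    simpa [Polynomial.mem_nthRootsFinset hepos] using hc
  refine (hfin.image (fun c => c • auxOp σ ρ g A0 hA0)).subset ?_
  rintro u ⟨hd, A, hA, rfl⟩
  let e := LinearEquiv.ofBijective A0 (auxTw_bij ρ hρ g A0 hA0 hA0ne)
  obtain ⟨c, hc⟩ := aux_schur_scalar ρ hρ (e.symm.toLinearMap ∘ₗ A) (fun n v => by
    have h1 := hA (MulAut.conjNormal g⁻¹ n) v
    have h3 := hA0 (MulAut.conjNormal g⁻¹ n) (e.symm (A v))
    have h2 : MulAut.conjNormal g (MulAut.conjNormal g⁻¹ n) = n := by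
      ext; simp [mul_assoc]
    rw [h2] at h1 h3
    simp only [LinearMap.comp_apply, LinearEquiv.coe_coe]
    rw [LinearEquiv.symm_apply_eq]
    change A _ = A0 _
    rw [h1, h3]
    congr 1
    exact (e.apply_symm_apply (A v)).symm)
  have hAc : A = c • A0 := by
    ext w
    have := LinearMap.congr_fun hc w
    simp only [LinearMap.comp_apply, LinearEquiv.coe_coe] at this
    rw [LinearEquiv.symm_apply_eq] at this
    rw [this]; simp [e]
  have hu : auxOp σ ρ g A hA = c • auxOp σ ρ g A0 hA0 := by
    ext φ w
    simp [auxOp_apply, hAc]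
  refine ⟨c, ?_, hu.symm⟩
  rw [hu, LinearMap.det_smul, hd0, mul_one] at hd
  exact hd

noncomputable def auxR (g : G) : W →ₗ[ℂ] W := ∑ n : N, σ.character ((n : G)⁻¹ * g⁻¹) • ρ n

theorem auxR_tw (g : G) : AuxTw ρ g (auxR σ ρ g) := by
  intro m w
  simp only [auxR, LinearMap.sum_apply, map_sum, LinearMap.smul_apply, map_smul]
  refine Fintype.sum_equiv
    ((Equiv.mulRight (MulAut.conjNormal g m)).trans (Equiv.mulLeft m⁻¹)) _ _ fun n => ?_
  rw [← Module.End.mul_apply, ← map_mul, ← Module.End.mul_apply, ← map_mul]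
  have h1 : m * ((Equiv.mulRight (MulAut.conjNormal g m)).trans (Equiv.mulLeft m⁻¹)) n
    = n * MulAut.conjNormal g m := by simp
  rw [h1]
  congr 1
  have : (((((Equiv.mulRight (MulAut.conjNormal g m)).trans (Equiv.mulLeft m⁻¹)) n : N) : G)⁻¹ * g⁻¹)
    = (g * m⁻¹ * g⁻¹) * ((n : G)⁻¹ * g⁻¹) * (g * m⁻¹ * g⁻¹)⁻¹ := by
      simp [mul_assoc]
  rw [this, Representation.char_conj]

theorem aux_trace_inv (hρ : AuxIrr ρ) (g : G) (B : W →ₗ[ℂ] W) (hB : auxR σ ρ g ∘ₗ B = LinearMap.id)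
    (hB' : B ∘ₗ auxR σ ρ g = LinearMap.id) (hE : Nontrivial (auxHom σ ρ))
    (v : Module.End ℂ (auxHom σ ρ)) (hv : ∀ φ w, (v φ).1 w = σ g⁻¹ (φ.1 (B w))) :
    LinearMap.trace ℂ _ v = (Module.finrank ℂ W : ℂ) / Fintype.card N := by
  let F : N → Module.End ℂ (W →ₗ[ℂ] V) := fun n =>
    { toFun := fun φ => σ ((n:G)⁻¹ * g⁻¹) ∘ₗ φ ∘ₗ (B ∘ₗ ρ n)
      map_add' := fun φ ψ => by ext; simp
      map_smul' := fun c φ => by ext; simp }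
  have hF : ∀ n φ w, F n φ w = σ ((n:G)⁻¹ * g⁻¹) (φ (B (ρ n w))) := fun _ _ _ => rfl
  let T : Module.End ℂ (W →ₗ[ℂ] V) := (Fintype.card N : ℂ)⁻¹ • ∑ n, F n
  have hT : ∀ φ w, T φ w = (Fintype.card N : ℂ)⁻¹ • ∑ n : N, σ ((n:G)⁻¹ * g⁻¹) (φ (B (ρ n w))) := by
    intro φ w
    simp [T, LinearMap.sum_apply, hF]
  have hcard : (Fintype.card N : ℂ) ≠ 0 := by simp
  have hmem : ∀ φ, T φ ∈ auxHom σ ρ := by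
    intro φ n w
    rw [hT, hT, map_smul, map_sum]
    congr 1
    refine Fintype.sum_equiv (Equiv.mulRight n) _ _ fun k => ?_
    simp only [Equiv.coe_mulRight]
    have h1 : ρ k (ρ n w) = ρ (k * n) w := by rw [map_mul]; rfl
    have h2 : (k : G)⁻¹ * g⁻¹ = n * (((k * n : N) : G)⁻¹ * g⁻¹) := by simp [mul_assoc]
    rw [h1, h2, map_mul]; rfl
  have hr : v = T.restrict (fun x _ => hmem x) := by
    ext φ w
    rw [hv, LinearMap.restrict_apply, hT]
    have : ∀ n : N, σ ((n:G)⁻¹ * g⁻¹) (φ.1 (B (ρ n w))) = σ g⁻¹ (φ.1 (B w)) := by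
      intro n
      have h1 : ((n:G)⁻¹ * g⁻¹) = g⁻¹ * ((MulAut.conjNormal g n⁻¹ : N) : G) := by simp [mul_assoc]
      rw [h1, map_mul, Module.End.mul_apply, ← φ.2]
      congr 2
      have h2 := auxR_tw σ ρ g n⁻¹ (B (ρ n w))
      have h3 := LinearMap.congr_fun hB (ρ n w)
      simp only [LinearMap.comp_apply, LinearMap.id_apply] at h3
      rw [h3] at h2
      have h4 := LinearMap.congr_fun hB' ((ρ (MulAut.conjNormal g n⁻¹)) (B (ρ n w)))
      simp only [LinearMap.comp_apply, LinearMap.id_apply] at h4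
      rw [← h4, h2]; simp
    rw [Finset.sum_congr rfl fun n _ => this n]
    simp [← Nat.cast_smul_eq_nsmul ℂ, smul_smul, hcard]
  rw [hr, LinearMap.trace_restrict_eq_of_forall_mem _ _ hmem]
  simp only [T, map_smul, map_sum]
  rw [Finset.sum_congr rfl fun (n : N) _ => aux_trace_hom (σ ((n:G)⁻¹ * g⁻¹)) (B ∘ₗ ρ n) (F n) fun φ => rfl]
  have : ∑ n : N, LinearMap.trace ℂ V (σ ((n:G)⁻¹ * g⁻¹)) * LinearMap.trace ℂ W (B ∘ₗ ρ n)
      = LinearMap.trace ℂ W (B ∘ₗ auxR σ ρ g) := by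
    have h5 : B ∘ₗ auxR σ ρ g = ∑ n : N, σ.character ((n:G)⁻¹ * g⁻¹) • (B ∘ₗ ρ n) := by
      ext w
      simp [auxR, LinearMap.sum_apply]
    rw [h5, map_sum]
    refine Finset.sum_congr rfl fun n _ => ?_
    rw [map_smul, smul_eq_mul]; rfl
  rw [this, hB', LinearMap.trace_id, smul_eq_mul, div_eq_inv_mul]

end

section
variable {G V W : Type*} [Group G] [Fintype G] {N : Subgroup G} [Fintype N] [N.Normal]
  [AddCommGroup V] [Module ℂ V] [AddCommGroup W] [Module ℂ W]
  (σ : Representation ℂ G V) (ρ : Representation ℂ N W)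
  [FiniteDimensional ℂ W] [FiniteDimensional ℂ V]

theorem aux_term (hρ : AuxIrr ρ) (hE : Nontrivial (auxHom σ ρ)) (g : G) :
    ∃ (t : ℂ) (u : Module.End ℂ (auxHom σ ρ)), IsIntegral ℤ t ∧ u ∈ auxS σ ρ ∧
      ((Module.finrank ℂ W : ℂ) / Fintype.card N) •
        auxOp σ ρ g (auxR σ ρ g) (auxR_tw σ ρ g) = t • u := by
  by_cases hR : auxR σ ρ g = 0
  · refine ⟨0, 1, isIntegral_zero, (auxS σ ρ).one_mem, ?_⟩
    ext φ w
    simp [auxOp_apply, hR]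
  have hbij := auxTw_bij ρ hρ g _ (auxR_tw σ ρ g) hR
  let e := LinearEquiv.ofBijective _ hbij
  let B : W →ₗ[ℂ] W := e.symm.toLinearMap
  have hB1 : ∀ w, auxR σ ρ g (B w) = w := fun w => e.apply_symm_apply w
  have hB2 : ∀ w, B (auxR σ ρ g w) = w := fun w => e.symm_apply_apply w
  have hBtw : AuxTw ρ g⁻¹ B := by
    intro m w
    have h1 := auxR_tw σ ρ g (MulAut.conjNormal g⁻¹ m) (B w)
    have h2 : MulAut.conjNormal g (MulAut.conjNormal g⁻¹ m) = m := by
      ext; simp [mul_assoc]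
    rw [h2, hB1] at h1
    rw [← h1, hB2]
  set β := auxOp σ ρ g (auxR σ ρ g) (auxR_tw σ ρ g) with hβ
  set v' := auxOp σ ρ g⁻¹ B hBtw with hv'
  have h1 : β * v' = 1 := by
    ext φ w
    simp [hβ, hv', auxOp_apply, hB2]
  have h2 : v' * β = 1 := by
    ext φ w
    simp [hβ, hv', auxOp_apply, hB1]
  have htr := aux_trace_inv σ ρ hρ g B (LinearMap.ext hB1) (LinearMap.ext hB2) hE v'
    (fun φ w => rfl)
  have hdet : LinearMap.det β ≠ 0 := by
    intro h
    have := congrArg LinearMap.det h1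
    rw [map_mul, h, zero_mul, map_one] at this
    exact zero_ne_one this
  have hepos : 0 < Module.finrank ℂ (auxHom σ ρ) := Module.finrank_pos
  obtain ⟨s, hs⟩ := IsAlgClosed.exists_pow_nat_eq (LinearMap.det β) hepos
  have hs0 : s ≠ 0 := by
    rintro rfl
    rw [zero_pow hepos.ne'] at hs
    exact hdet hs.symm
  have hmem : s⁻¹ • β ∈ auxS σ ρ := by
    refine ⟨?_, g, s⁻¹ • auxR σ ρ g, ?_, ?_⟩
    · rw [LinearMap.det_smul, inv_pow, hs, inv_mul_cancel₀ hdet]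
    · intro m w
      simp [auxR_tw σ ρ g m w]
    · ext φ w
      refine Eq.trans ?_ (auxOp_apply σ ρ _ _ _ φ w).symm
      simp [hβ, auxOp_apply]
  refine ⟨s * ((Module.finrank ℂ W : ℂ) / Fintype.card N), s⁻¹ • β, ?_, hmem, ?_⟩
  · obtain ⟨k, hk, hk1⟩ := aux_finord (auxS σ ρ) (auxS_finite σ ρ hρ hE) (s⁻¹ • β) (s • v') hmem
      (by rw [smul_mul_smul_comm, h2, mul_inv_cancel₀ hs0, one_smul])
      (by rw [smul_mul_smul_comm, h1, inv_mul_cancel₀ hs0, one_smul])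
    have := aux_trace_integral (s • v') k hk hk1
    rwa [map_smul, htr, smul_eq_mul] at this
  · rw [smul_smul]
    congr 1
    field_simp

theorem aux_dvd (hσ : AuxIrr σ) (hρ : AuxIrr ρ) (hE : Nontrivial (auxHom σ ρ))
    (hn : ∑ g : G, σ.character g * σ.character g⁻¹ = Fintype.card G) :
    Module.finrank ℂ V ∣ N.index * Module.finrank ℂ W := by
  have := hσ.1
  have hVpos : 0 < Module.finrank ℂ V := Module.finrank_pos
  have hV0 : (Module.finrank ℂ V : ℂ) ≠ 0 := by exact_mod_cast hVpos.ne'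
  obtain ⟨c₀, hc₀⟩ := aux_schur_scalar σ hσ (∑ g : G, σ.character g⁻¹ • σ g) (by
    intro n v
    simp only [LinearMap.sum_apply, map_sum, LinearMap.smul_apply, map_smul]
    refine Fintype.sum_equiv ((Equiv.mulRight n).trans (Equiv.mulLeft n⁻¹)) _ _ fun g => ?_
    rw [← Module.End.mul_apply, ← map_mul, ← Module.End.mul_apply, ← map_mul]
    have h1 : n * ((Equiv.mulRight n).trans (Equiv.mulLeft n⁻¹)) g = g * n := by simp
    have h2 : (((Equiv.mulRight n).trans (Equiv.mulLeft n⁻¹)) g)⁻¹ = n⁻¹ * g⁻¹ * (n⁻¹)⁻¹ := by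
      simp [mul_assoc]
    rw [h1, h2, Representation.char_conj])
  have hc : c₀ * Module.finrank ℂ V = Fintype.card G := by
    have := congrArg (LinearMap.trace ℂ V) hc₀
    rw [map_sum, map_smul, LinearMap.trace_id, smul_eq_mul] at this
    rw [← this, ← hn]
    refine Finset.sum_congr rfl fun g _ => ?_
    rw [map_smul, smul_eq_mul, mul_comm]; rfl
  have hsum : c₀ • (1 : Module.End ℂ (auxHom σ ρ)) =
      ∑ q : G ⧸ N, auxOp σ ρ q.out (auxR σ ρ q.out) (auxR_tw σ ρ q.out) := by
    ext φ w
    have h1 : c₀ • φ.1 w = ∑ g : G, σ.character g⁻¹ • σ g (φ.1 w) := by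
      have := LinearMap.congr_fun hc₀ (φ.1 w)
      simp only [LinearMap.sum_apply, LinearMap.smul_apply, LinearMap.id_apply] at this
      exact this.symm
    have h2 : ((∑ q : G ⧸ N, auxOp σ ρ q.out (auxR σ ρ q.out) (auxR_tw σ ρ q.out)) φ).1 w
        = ∑ q : G ⧸ N, ∑ n : N, σ.character ((n : G)⁻¹ * q.out⁻¹) • σ (q.out * n) (φ.1 w) := by
      rw [LinearMap.sum_apply, AddSubmonoidClass.coe_finsetSum, LinearMap.sum_apply]
      refine Finset.sum_congr rfl fun q _ => ?_
      rw [auxOp_apply]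
      simp only [auxR, LinearMap.sum_apply, map_sum, LinearMap.smul_apply, map_smul, map_mul,
        Module.End.mul_apply]
      refine Finset.sum_congr rfl fun n _ => ?_
      rw [φ.2]
    refine Eq.trans ?_ h2.symm
    refine Eq.trans h1 ?_
    rw [← Fintype.sum_prod_type' (fun (q : G ⧸ N) (n : N) =>
      σ.character ((n : G)⁻¹ * q.out⁻¹) • σ (q.out * n) (φ.1 w))]
    refine (Fintype.sum_bijective (fun x : (G ⧸ N) × N => x.1.out * (x.2 : G)) ⟨?_, ?_⟩ _ _ ?_).symm
    · rintro ⟨q, n⟩ ⟨q', n'⟩ h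
      have h4 : q = q' := by
        have := congrArg (QuotientGroup.mk (s := N)) h
        simpa using this
      subst h4
      simpa using h
    · intro g
      refine ⟨⟨(g : G ⧸ N), ⟨(g : G ⧸ N).out⁻¹ * g, ?_⟩⟩, by simp⟩
      rw [← QuotientGroup.eq]; simp
    · rintro ⟨q, n⟩
      simp
  choose t u ht hu htu using fun q : G ⧸ N => aux_term σ ρ hρ hE q.out
  have hint := aux_scalar_integral (auxS σ ρ) (auxS_finite σ ρ hρ hE) Finset.univ t u ht
    (fun i _ => hu i) (((Module.finrank ℂ W : ℂ) / Fintype.card N) * c₀) (by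
      rw [mul_smul, hsum, Finset.smul_sum]
      exact Finset.sum_congr rfl fun q _ => htu q)
  have hN0 : (Fintype.card N : ℂ) ≠ 0 := by simp
  have hidx : (N.index : ℂ) * Fintype.card N = Fintype.card G := by
    have := N.index_mul_card
    rw [Nat.card_eq_fintype_card, Nat.card_eq_fintype_card] at this
    exact_mod_cast this
  have hval : ((Module.finrank ℂ W : ℂ) / Fintype.card N) * c₀ =
      algebraMap ℚ ℂ ((N.index * Module.finrank ℂ W : ℕ) / (Module.finrank ℂ V : ℕ)) := by
    have : c₀ = N.index * Fintype.card N / Module.finrank ℂ V := by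
      rw [eq_div_iff hV0, hc, hidx]
    rw [this]
    simp only [eq_ratCast]
    push_cast
    field_simp
  rw [hval, isIntegral_algebraMap_iff (algebraMap ℚ ℂ).injective, IsIntegrallyClosed.isIntegral_iff] at hint
  obtain ⟨z, hz⟩ := hint
  have hVQ : (Module.finrank ℂ V : ℚ) ≠ 0 := by exact_mod_cast hVpos.ne'
  rw [eq_div_iff hVQ] at hz
  have : (Module.finrank ℂ V : ℤ) ∣ ((N.index * Module.finrank ℂ W : ℕ) : ℤ) := by
    refine ⟨z, ?_⟩
    have : ((N.index * Module.finrank ℂ W : ℕ) : ℚ) = Module.finrank ℂ V * z := by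
      rw [← hz, mul_comm]; simp
    exact_mod_cast this
  exact_mod_cast this

end
theorem aux_average {H V W : Type*} [Group H] [Fintype H] [AddCommGroup V] [Module ℂ V]
    [AddCommGroup W] [Module ℂ W] (ρ : Representation ℂ H V) (τ : Representation ℂ H W)
    (f : W →ₗ[ℂ] V) (hf : ∀ h w, f (τ h w) = ρ h (f w)) (hi : Function.Injective f) :
    ∃ F : V →ₗ[ℂ] W, (∀ h v, F (ρ h v) = τ h (F v)) ∧ ∀ w, F (f w) = w := by
  obtain ⟨F0, hF0⟩ := LinearMap.exists_leftInverse_of_injective f (LinearMap.ker_eq_bot.2 hi)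
  have hF0' : ∀ w, F0 (f w) = w := fun w => LinearMap.congr_fun hF0 w
  have hcard : (Fintype.card H : ℂ) ≠ 0 := by simp
  refine ⟨(Fintype.card H : ℂ)⁻¹ • ∑ h : H, τ h⁻¹ ∘ₗ F0 ∘ₗ ρ h, ?_, ?_⟩
  · intro h v
    simp only [LinearMap.smul_apply, LinearMap.sum_apply, LinearMap.comp_apply, map_smul, map_sum]
    congr 1
    refine Fintype.sum_equiv (Equiv.mulRight h) _ _ fun k => ?_
    simp only [Equiv.coe_mulRight]
    have h1 : ρ k (ρ h v) = ρ (k * h) v := by rw [map_mul]; rfl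
    have h2 : k⁻¹ = h * (k * h)⁻¹ := by simp
    rw [h1, h2, map_mul]; rfl
  · intro w
    simp only [LinearMap.smul_apply, LinearMap.sum_apply, LinearMap.comp_apply]
    have : ∀ h : H, τ h⁻¹ (F0 (ρ h (f w))) = w := by
      intro h
      rw [← hf, hF0', ← Module.End.mul_apply, ← map_mul]; simp
    rw [Finset.sum_congr rfl fun h _ => this h]
    simp [← Nat.cast_smul_eq_nsmul ℂ, smul_smul, hcard]

theorem aux_norm_of_irr {H V : Type*} [Group H] [Fintype H] [AddCommGroup V] [Module ℂ V]
    [FiniteDimensional ℂ V] (ρ : Representation ℂ H V) (hρ : AuxIrr ρ) :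
    ∑ g : H, ρ.character g * ρ.character g⁻¹ = Fintype.card H := by
  have h := Representation.card_inv_mul_sum_char_mul_char_eq_finrank ρ ρ
  have h1 : Module.finrank ℂ (Representation.IntertwiningMap ρ ρ) = 1 := by
    refine finrank_eq_one (Representation.IntertwiningMap.id ρ) ?_ ?_
    · intro h0
      have := hρ.1
      obtain ⟨v, hv⟩ := exists_ne (0 : V)
      exact hv (by simpa using congrArg (fun f : Representation.IntertwiningMap ρ ρ => f v) h0)
    · intro f
      obtain ⟨c, hc⟩ := aux_schur_scalar ρ hρ f.toLinearMap (fun n v => f.isIntertwining _ _ n v)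
      refine ⟨c, ?_⟩
      ext v
      have := LinearMap.congr_fun hc v
      simpa using this.symm
  rw [h1, Nat.card_eq_fintype_card, Nat.cast_one, inv_mul_eq_iff_eq_mul₀ (by simp), mul_one] at h
  exact h

theorem aux_irr_of_norm {H V : Type*} [Group H] [Fintype H] [AddCommGroup V] [Module ℂ V]
    [FiniteDimensional ℂ V] (ρ : Representation ℂ H V)
    (hn : ∑ g : H, ρ.character g * ρ.character g⁻¹ = Fintype.card H) : AuxIrr ρ := by
  have h := Representation.card_inv_mul_sum_char_mul_char_eq_finrank ρ ρ
  rw [hn, Nat.card_eq_fintype_card, inv_mul_cancel₀ (by simp)] at h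
  have h1 : Module.finrank ℂ (Representation.IntertwiningMap ρ ρ) = 1 := by exact_mod_cast h.symm
  have hV : Nontrivial V := by
    by_contra hV
    rw [not_nontrivial_iff_subsingleton] at hV
    have : Subsingleton (Representation.IntertwiningMap ρ ρ) :=
      ⟨fun f g => by ext v; exact Subsingleton.elim _ _⟩
    rw [Module.finrank_zero_of_subsingleton] at h1
    exact zero_ne_one h1
  refine ⟨hV, fun U hU => ?_⟩
  obtain ⟨F, hF, hF'⟩ := aux_average ρ (Subrepresentation.toRepresentation ⟨U, fun g => hU g⟩)
    U.subtype (fun h w => rfl) U.injective_subtype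
  let π : Representation.IntertwiningMap ρ ρ :=
    ⟨U.subtype ∘ₗ F, fun g => by
      ext v
      simp only [LinearMap.comp_apply, hF]; rfl⟩
  have hid : Representation.IntertwiningMap.id ρ ≠ 0 := by
    intro h0
    obtain ⟨v, hv⟩ := exists_ne (0 : V)
    exact hv (by simpa using congrArg (fun f : Representation.IntertwiningMap ρ ρ => f v) h0)
  obtain ⟨c, hc⟩ := (finrank_eq_one_iff_of_nonzero' _ hid).1 h1 π
  have hc' : ∀ v, c • v = (F v : V) := fun v => by
    have h3 := congrArg (fun f : Representation.IntertwiningMap ρ ρ => f v) hc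
    exact h3
  by_cases h0 : c = 0
  · left
    rw [eq_bot_iff]
    intro u hu
    have := hc' u
    rw [show F u = ⟨u, hu⟩ from hF' ⟨u, hu⟩, h0, zero_smul] at this
    exact this.symm
  · right
    rw [eq_top_iff]
    intro u _
    have : c • u ∈ U := by rw [hc' u]; exact (F u).2
    exact (U.smul_mem_iff h0).1 this

theorem aux_simple_iff {H : Type} [Group H] [Fintype H] (V : FDRep ℂ H) :
    CategoryTheory.Simple V ↔ AuxIrr (H := H) (V := V) V.ρ := by
  rw [FDRep.simple_iff_char_is_norm_one, Nat.card_eq_fintype_card]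
  exact ⟨fun h => aux_irr_of_norm (H := H) (V := V) V.ρ h, fun h => aux_norm_of_irr (H := H) (V := V) V.ρ h⟩

theorem aux_char_split {H V : Type*} [Group H] [Fintype H] [AddCommGroup V] [Module ℂ V]
    [FiniteDimensional ℂ V] (ρ : Representation ℂ H V) (A B : Subrepresentation ρ)
    (π : V →ₗ[ℂ] V) (hπA : ∀ v, π v ∈ A.toSubmodule) (hπ : ∀ v ∈ A.toSubmodule, π v = v)
    (hπB : ∀ v, v - π v ∈ B.toSubmodule) (hB : ∀ v ∈ B.toSubmodule, π v = 0) (h : H) :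
    ρ.character h = A.toRepresentation.character h + B.toRepresentation.character h := by
  have e : ρ h = ρ h ∘ₗ π + ρ h ∘ₗ (LinearMap.id - π) := by ext v; simp
  have hA1 : ∀ x, (ρ h ∘ₗ π) x ∈ A.toSubmodule := fun x => A.apply_mem_toSubmodule h (hπA x)
  have hB1 : ∀ x, (ρ h ∘ₗ (LinearMap.id - π)) x ∈ B.toSubmodule :=
    fun x => B.apply_mem_toSubmodule h (hπB x)
  have h1 := LinearMap.trace_restrict_eq_of_forall_mem A.toSubmodule _ hA1
  have h2 := LinearMap.trace_restrict_eq_of_forall_mem B.toSubmodule _ hB1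
  unfold Representation.character
  rw [e, map_add, ← h1, ← h2]
  congr 2
  · ext x
    simp only [LinearMap.restrict_apply, LinearMap.comp_apply, hπ x x.2]; rfl
  · ext x
    simp only [LinearMap.restrict_apply, LinearMap.comp_apply, LinearMap.sub_apply, hB x x.2, sub_zero]
    rfl

theorem aux_decomp {H : Type} [Group H] [Fintype H] (d : ℕ) :
    ∀ {V : Type} [AddCommGroup V] [Module ℂ V] [FiniteDimensional ℂ V]
    (ρ : Representation ℂ H V), Module.finrank ℂ V = d →
    ∃ (ι : Type) (_ : Fintype ι) (W : ι → FDRep ℂ H) (f : ∀ i, W i →ₗ[ℂ] V),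
      (∀ i, AuxIrr (H := H) (V := W i) (W i).ρ) ∧ (∀ i, f i ≠ 0) ∧
      (∀ i h w, f i ((W i).ρ h w) = ρ h (f i w)) ∧
      ∀ h, ρ.character h = ∑ i, (W i).character h := by
  induction d using Nat.strong_induction_on with
  | _ d ih =>
  intro V _ _ _ ρ hd
  rcases subsingleton_or_nontrivial V with hV | hV
  · refine ⟨Empty, inferInstance, fun i => i.elim, fun i => i.elim, fun i => i.elim,
      fun i => i.elim, fun i => i.elim, fun h => ?_⟩
    have : ρ h = 0 := Subsingleton.elim _ _
    simp [Representation.character, this]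
  by_cases hirr : AuxIrr ρ
  · refine ⟨Unit, inferInstance, fun _ => FDRep.of ρ, fun _ => LinearMap.id, fun _ => ?_,
      fun _ => ?_, fun _ h w => rfl, fun h => ?_⟩
    · exact hirr
    · exact fun h => by
        obtain ⟨v, hv⟩ := exists_ne (0 : V)
        exact hv (LinearMap.congr_fun h v)
    · simp; rfl
  have : ∃ U : Submodule ℂ V, (∀ g, ∀ v ∈ U, ρ g v ∈ U) ∧ U ≠ ⊥ ∧ U ≠ ⊤ := by
    by_contra hcon
    apply hirr
    refine ⟨hV, fun U hU => ?_⟩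
    by_contra h
    push Not at h
    exact hcon ⟨U, hU, h.1, h.2⟩
  obtain ⟨U, hU, hbot, htop⟩ := this
  let A : Subrepresentation ρ := ⟨U, fun g => hU g⟩
  obtain ⟨F, hF, hF'⟩ := aux_average ρ A.toRepresentation
    U.subtype (fun h w => rfl) U.injective_subtype
  let B : Subrepresentation ρ := ⟨LinearMap.ker F, fun g v hv => by
    rw [LinearMap.mem_ker] at hv ⊢; rw [hF, hv, map_zero]⟩
  have hsplit := aux_char_split ρ A B (U.subtype ∘ₗ F) (fun v => (F v).2)
    (fun v hv => by
      show ((F v : U) : V) = v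
      rw [show F v = ⟨v, hv⟩ from hF' ⟨v, hv⟩])
    (fun v => by
      show F _ = 0
      rw [map_sub]
      show F v - F ((F v : U) : V) = 0
      rw [sub_eq_zero]; exact (hF' (F v)).symm)
    (fun v hv => by
      show ((F v : U) : V) = 0
      rw [show F v = 0 from hv]; rfl)
  have hA : Module.finrank ℂ A.toSubmodule < d := by
    rw [← hd]; exact Submodule.finrank_lt htop
  have hB : Module.finrank ℂ B.toSubmodule < d := by
    rw [← hd]
    refine Submodule.finrank_lt fun h => hbot ?_
    rw [eq_bot_iff]
    intro u hu
    have h1 : F u = ⟨u, hu⟩ := hF' ⟨u, hu⟩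
    have h2 : F u = 0 := by
      have : u ∈ LinearMap.ker F := by
        have h3 : LinearMap.ker F = ⊤ := h
        rw [h3]; trivial
      exact this
    rw [h1] at h2
    exact congrArg Subtype.val h2
  obtain ⟨ι₁, _, W₁, f₁, a₁, b₁, c₁, d₁⟩ := ih _ hA A.toRepresentation rfl
  obtain ⟨ι₂, _, W₂, f₂, a₂, b₂, c₂, d₂⟩ := ih _ hB B.toRepresentation rfl
  refine ⟨ι₁ ⊕ ι₂, inferInstance, Sum.elim W₁ W₂, fun i => match i with
    | Sum.inl i => A.toSubmodule.subtype ∘ₗ f₁ i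
    | Sum.inr i => B.toSubmodule.subtype ∘ₗ f₂ i, ?_, ?_, ?_, ?_⟩
  · rintro (i | i)
    · exact a₁ i
    · exact a₂ i
  · rintro (i | i)
    · intro h
      apply b₁ i
      ext w
      exact LinearMap.congr_fun h w
    · intro h
      apply b₂ i
      ext w
      exact LinearMap.congr_fun h w
  · rintro (i | i) h w
    · exact congrArg Subtype.val (c₁ i h w)
    · exact congrArg Subtype.val (c₂ i h w)
  · intro h
    rw [hsplit, d₁, d₂, Fintype.sum_sum_type]; rfl

theorem aux_dim_eq {G V W W' : Type*} [Group G] [Fintype G] {N : Subgroup G} [Fintype N] [N.Normal]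
    [AddCommGroup V] [Module ℂ V] [AddCommGroup W] [Module ℂ W] [AddCommGroup W'] [Module ℂ W']
    (σ : Representation ℂ G V) (ρ : Representation ℂ N W) (ρ' : Representation ℂ N W')
    (hσ : AuxIrr σ) (hρ : AuxIrr ρ) (hρ' : AuxIrr ρ')
    (f : W →ₗ[ℂ] V) (f' : W' →ₗ[ℂ] V) (h0 : f ≠ 0) (h0' : f' ≠ 0)
    (hf : ∀ (n : N) w, f (ρ n w) = σ n (f w)) (hf' : ∀ (n : N) w, f' (ρ' n w) = σ n (f' w)) :
    Module.finrank ℂ W = Module.finrank ℂ W' := by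
  have hinj : Function.Injective f' := by
    rw [← LinearMap.ker_eq_bot]
    rcases hρ'.2 (LinearMap.ker f') (fun g v hv => by
      rw [LinearMap.mem_ker] at hv ⊢; rw [hf', hv, map_zero]) with h | h
    · exact h
    · exact absurd (LinearMap.ker_eq_top.1 h) h0'
  obtain ⟨F, hF, hF'⟩ := aux_average (σ.comp N.subtype) ρ' f' hf' hinj
  let K : Submodule ℂ V := ⨅ g : G, LinearMap.ker (F ∘ₗ σ g)
  have hK : ∀ v, v ∈ K ↔ ∀ g, F (σ g v) = 0 := by
    intro v; simp [K, Submodule.mem_iInf]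
  have hKbot : K = ⊥ := by
    rcases hσ.2 K (fun g v hv => by
      rw [hK] at hv ⊢
      intro k
      have := hv (k * g)
      rwa [map_mul] at this) with h | h
    · exact h
    · exfalso
      have := hρ'.1
      obtain ⟨w, hw⟩ := exists_ne (0 : W')
      have h1 : f' w ∈ K := by rw [h]; trivial
      have h2 := (hK _).1 h1 1
      rw [map_one, Module.End.one_apply, hF'] at h2
      exact hw h2
  obtain ⟨w, hw⟩ : ∃ w, f w ≠ 0 := by
    by_contra h
    push Not at h
    exact h0 (LinearMap.ext h)
  have : ∃ g, F (σ g (f w)) ≠ 0 := by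
    by_contra h
    push Not at h
    have h1 := (hK _).2 h
    rw [hKbot] at h1
    exact hw h1
  obtain ⟨g, hg⟩ := this
  have hb := aux_schur ρ ρ' hρ hρ' (MulAut.conjNormal g : MulAut N).toEquiv (F ∘ₗ σ g ∘ₗ f)
    (fun n v => by
      simp only [LinearMap.comp_apply, hf]
      have h1 : σ g (σ n (f v)) = σ ((MulAut.conjNormal g n : N) : G) (σ g (f v)) := by
        rw [← Module.End.mul_apply, ← map_mul, ← Module.End.mul_apply, ← map_mul]
        congr 2
        simp [mul_assoc]
      rw [h1]
      exact hF (MulAut.conjNormal g n) (σ g (f v)))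
    (fun h => hg (LinearMap.congr_fun h w))
  exact (LinearEquiv.ofBijective _ hb).finrank_eq

theorem aux_inducedChar_transport {A B : Type} [Group A] [Fintype A] [Group B] [Fintype B]
    (e : A ≃* B) (Q : Subgroup A) (l : Q → ℂ) (b : B) :
    inducedChar (Q.map (e : A →* B)) (fun x => l ((e.subgroupMap Q).symm x)) b =
      inducedChar Q l (e.symm b) := by
  unfold inducedChar
  congr 1
  · congr 2
    exact Fintype.card_congr (e.subgroupMap Q).symm.toEquiv
  · refine Fintype.sum_bijective e.symm e.symm.bijective _ _ fun x => ?_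
    have h1 : x * b * x⁻¹ = e (e.symm x * e.symm b * (e.symm x)⁻¹) := by simp
    by_cases h : e.symm x * e.symm b * (e.symm x)⁻¹ ∈ Q
    · have h2 : x * b * x⁻¹ ∈ Q.map (e : A →* B) := by
        rw [h1]; exact ⟨_, h, rfl⟩
      rw [dif_pos h2]
      refine Eq.trans ?_ (dif_pos h).symm
      refine congrArg l ?_
      rw [MulEquiv.symm_apply_eq]
      ext
      exact h1
    · have h2 : ¬ x * b * x⁻¹ ∈ Q.map (e : A →* B) := by
        rintro ⟨y, hy, hy'⟩
        apply h
        rw [h1] at hy'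
        have := e.injective hy'
        rwa [← this]
      rw [dif_neg h2, dif_neg h]

theorem aux_irrchar_transport {A B : Type} [Group A] [Fintype A] [Group B] [Fintype B]
    (e : A ≃* B) (l : A → ℂ) (hl : IsIrreducibleCharacter l) :
    IsIrreducibleCharacter (fun b => l (e.symm b)) := by
  obtain ⟨V, hV, rfl⟩ := hl
  refine ⟨FDRep.of (V := V) (V.ρ.comp e.symm.toMonoidHom), ?_, rfl⟩
  rw [FDRep.simple_iff_char_is_norm_one, Nat.card_eq_fintype_card] at hV ⊢
  rw [← Fintype.card_congr e.toEquiv, ← hV]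
  refine Fintype.sum_equiv e.symm.toEquiv _ _ fun b => ?_
  have h1 : ∀ b, (FDRep.of (V := V) (V.ρ.comp e.symm.toMonoidHom)).character b = V.character (e.symm b) :=
    fun _ => rfl
  rw [h1, h1, map_inv]; rfl

theorem reduction_to_normal_subgroup_of_coprime_index
    (p : ℕ) [Fact p.Prime] (G : Type) [Group G] [Fintype G]
    (N : Subgroup G) (hN : N.Normal) (hidx : ¬ p ∣ N.index)
    (P : Sylow p G) (hPN : (P : Subgroup G) ≤ N)
    -- the property holds for every irreducible character of `N`
    -- (with respect to its Sylow `p`-subgroup `P`):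
    (hyp : ∀ (W : FDRep ℂ ↥N), CategoryTheory.Simple W →
      SumInducedProperty p ((P : Subgroup G).subgroupOf N) W.character
        (Module.finrank ℂ W)) :
    -- then it holds for every irreducible character of `G`:
    ∀ (V : FDRep ℂ G), CategoryTheory.Simple V →
      SumInducedProperty p (P : Subgroup G) V.character (Module.finrank ℂ V) := by
  intro V hV
  have hσ : AuxIrr (H := G) (V := V) V.ρ := (aux_simple_iff V).1 hV
  obtain ⟨ι, _, W, f, hW, hf0, hf, hchar⟩ := aux_decomp (H := N) _ (V := V) 
    ((V.ρ : Representation ℂ G V).comp N.subtype) rfl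
  have hnorm := aux_norm_of_irr (H := G) (V := V) V.ρ hσ
  have hdvd : ∀ i, Module.finrank ℂ V ∣ N.index * Module.finrank ℂ (W i) := by
    intro i
    refine aux_dvd (G := G) (V := V) (W := W i) (N := N) V.ρ (W i).ρ hσ (hW i) ?_ hnorm
    refine ⟨⟨⟨f i, fun n w => hf i n w⟩, 0, fun h => hf0 i (congrArg Subtype.val h)⟩⟩
  have hdim : ∀ i j, Module.finrank ℂ (W i) = Module.finrank ℂ (W j) := fun i j =>
    aux_dim_eq (G := G) (V := V) (W := W i) (W' := W j) (N := N) V.ρ (W i).ρ (W j).ρ hσ (hW i) (hW j)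
      (f i) (f j) (hf0 i) (hf0 j) (hf i) (hf j)
  have hsum : Module.finrank ℂ V = ∑ i, Module.finrank ℂ (W i) := by
    have h1 := hchar 1
    rw [Representation.char_one] at h1
    simp only [FDRep.char_one] at h1
    exact_mod_cast h1
  have hVpos : 0 < Module.finrank ℂ V := by
    have := hσ.1
    exact Module.finrank_pos
  have hfact : ∀ i, (Module.finrank ℂ V).factorization p = (Module.finrank ℂ (W i)).factorization p := by
    intro i
    have hk : Module.finrank ℂ V = Fintype.card ι * Module.finrank ℂ (W i) := by
      rw [hsum, Finset.sum_congr rfl fun j _ => hdim j i]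
      simp
    have hne := hVpos.ne'
    rw [hk] at hne
    have hd := hdvd i
    have hWpos : 0 < Module.finrank ℂ (W i) := Nat.pos_of_ne_zero (right_ne_zero_of_mul hne)
    rw [hk] at hd
    have hd' := Nat.dvd_of_mul_dvd_mul_right hWpos hd
    rw [hk, Nat.factorization_mul (left_ne_zero_of_mul hne) hWpos.ne', Finsupp.add_apply,
      Nat.factorization_eq_zero_of_not_dvd (fun h => hidx (h.trans hd')), zero_add]
  choose n Q lam hirr hind hval using fun i => hyp (W i) ((aux_simple_iff (W i)).2 (hW i))
  let e := Subgroup.subgroupOfEquivOfLe hPN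
  let ε := Fintype.equivFin (Σ i, Fin (n i))
  refine ⟨Fintype.card (Σ i, Fin (n i)),
    fun k => (Q (ε.symm k).1 (ε.symm k).2).map (e : _ →* _),
    fun k => fun x => lam (ε.symm k).1 (ε.symm k).2
      ((e.subgroupMap (Q (ε.symm k).1 (ε.symm k).2)).symm x), ?_, ?_, ?_⟩
  · intro k
    exact aux_irrchar_transport (e.subgroupMap (Q (ε.symm k).1 (ε.symm k).2)) _ (hirr _ _)
  · intro k
    rw [hfact (ε.symm k).1, hind _ (ε.symm k).2]
    exact (Subgroup.index_map_equiv _ e).symm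
  · intro x
    have h1 : V.character (x : G) = ∑ i, (W i).character ⟨x, hPN x.2⟩ := hchar ⟨x, hPN x.2⟩
    have h2 : ∀ i, (W i).character ⟨x, hPN x.2⟩ = ∑ j, inducedChar (Q i j) (lam i j) (e.symm x) :=
      fun i => hval i (e.symm x)
    rw [h1, Finset.sum_congr rfl fun i _ => h2 i, ← Fintype.sum_sigma']
    refine Fintype.sum_equiv ε _ _ fun k => ?_
    refine Eq.trans ?_ (aux_inducedChar_transport e _ (lam (ε.symm (ε k)).1 (ε.symm (ε k)).2) x).symm
    rw [ε.symm_apply_apply]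
end

section
/- Let p be a prime, let G₁ and G₂ be finite groups with Sylow p-subgroups P₁ ≤ G₁ and P₂ ≤ G₂, and set G = G₁ × G₂ and P = P₁ × P₂ (a Sylow p-subgroup of G). Assume that for i = 1, 2 and every irreducible character χᵢ of Gᵢ, the restriction (χᵢ)_{Pᵢ} is an integral linear combination of characters of the form λ^{Pᵢ} induced from irreducible characters λ of subgroups Q ≤ Pᵢ with χᵢ(1)_p = |Pᵢ : Q|. Then for every irreducible character χ of G, the restriction χ_P is an integral linear combination of characters of the form λ^P induced from irreducible characters λ of subgroups Q ≤ P with χ(1)_p = |P : Q|. -/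
open scoped Classical

/-- The restriction of `χ` (a character of degree `d` of the ambient group `G`) to the
subgroup `P` is an integral (ℤ-) linear combination of characters `λ^P` induced from
irreducible characters `λ` of subgroups `Q ≤ P` satisfying `d_p = |P : Q|`. -/
def ZSumInducedProperty (p : ℕ) {G : Type} [Group G] [Fintype G] (P : Subgroup G)
    (χ : G → ℂ) (d : ℕ) : Prop :=
  ∃ (n : ℕ) (c : Fin n → ℤ) (Q : Fin n → Subgroup ↥P)
    (lam : (i : Fin n) → ↥(Q i) → ℂ),
    (∀ i, IsIrreducibleCharacter (lam i)) ∧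
    (∀ i, p ^ (d.factorization p) = (Q i).index) ∧
    (∀ x : ↥P, χ ↑x = ∑ i, (c i : ℂ) * inducedChar (Q i) (lam i) x)

section Helpers
open CategoryTheory

noncomputable def mkHomFD {G : Type} [Group G] {V W : FDRep ℂ G} (f : V →ₗ[ℂ] W)
    (h : ∀ g v, f (V.ρ g v) = W.ρ g (f v)) : V ⟶ W :=
  ⟨InducedCategory.homMk (ModuleCat.ofHom f), fun g ↦ by
    ext v
    exact h g v⟩

noncomputable def linFD {G : Type} [Group G] {V W : FDRep ℂ G} (f : V ⟶ W) : V →ₗ[ℂ] W :=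
  f.hom.hom.hom

theorem linFD_comm {G : Type} [Group G] {V W : FDRep ℂ G} (f : V ⟶ W) (g : G) (v : V) :
    linFD f (V.ρ g v) = W.ρ g (linFD f v) :=
  ConcreteCategory.congr_hom ((forget (FGModuleCat ℂ)).congr_map (f.comm g)) v

theorem linFD_mk {G : Type} [Group G] {V W : FDRep ℂ G} (f : V →ₗ[ℂ] W) (h) :
   linFD (mkHomFD f h) = f := rfl

theorem linFD_zero {G : Type} [Group G] {V W : FDRep ℂ G} : linFD (0 : V ⟶ W) = 0 := rfl
theorem linFD_comp {G : Type} [Group G] {U V W : FDRep ℂ G} (f : U ⟶ V) (g : V ⟶ W) :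
  linFD (f ≫ g) = linFD g ∘ₗ linFD f := rfl

theorem linFD_ext {G : Type} [Group G] {V W : FDRep ℂ G} {f g : V ⟶ W} (h : linFD f = linFD g) :
    f = g := by
  ext v
  exact LinearMap.congr_fun h v

theorem linFD_inj {G : Type} [Group G] {V W : FDRep ℂ G} (f : V ⟶ W) [Mono f] :
    Function.Injective (linFD f) := by
  have : Mono ((forget₂ (FDRep ℂ G) (Rep ℂ G)).map f) := inferInstance
  exact (Rep.mono_iff_injective _).1 this

theorem iso_of_bij {G : Type} [Group G] {V W : FDRep ℂ G} (f : V ⟶ W)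
    (h : Function.Bijective (linFD f)) : IsIso f := by
  let e := LinearEquiv.ofBijective (linFD f) h
  refine ⟨mkHomFD e.symm.toLinearMap ?_, ?_, ?_⟩
  · intro g v
    apply e.injective
    have := linFD_comm f g (e.symm v)
    change e (e.symm _) = e _
    change e _ = _ at this
    refine Eq.trans ?_ this.symm
    rw [e.apply_symm_apply]
    change _ = W.ρ g (e (e.symm v))
    rw [e.apply_symm_apply]
  · apply linFD_ext
    ext v
    exact e.symm_apply_apply v
  · apply linFD_ext
    ext v
    exact e.apply_symm_apply v

theorem finrank_lt {G : Type} [Group G] {V W : FDRep ℂ G} (f : V ⟶ W) [Mono f] (h : ¬ IsIso f) :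
    Module.finrank ℂ V < Module.finrank ℂ W := by
  have hi := linFD_inj f
  refine lt_of_le_of_ne (LinearMap.finrank_le_finrank_of_injective hi) fun he => h ?_
  exact iso_of_bij f ⟨hi, (LinearMap.injective_iff_surjective_of_finrank_eq_finrank he).1 hi⟩

theorem exists_simple {G : Type} [Group G] (n : ℕ) : ∀ (V : FDRep ℂ G),
    Module.finrank ℂ V = n → n ≠ 0 → ∃ (S : FDRep ℂ G) (f : S ⟶ V), Simple S ∧ f ≠ 0 := by
  induction n using Nat.strong_induction_on with
  | _ n ih =>
    intro V hV hn
    have hid : 𝟙 V ≠ 0 := by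
      intro h
      have := congrArg linFD h
      have h2 : Subsingleton V := ⟨fun a b => by
        have ha := LinearMap.congr_fun this a
        have hb := LinearMap.congr_fun this b
        exact ha.trans hb.symm⟩
      rw [Module.finrank_zero_of_subsingleton] at hV
      exact hn hV.symm
    by_cases hs : Simple V
    · exact ⟨V, 𝟙 V, hs, hid⟩
    · have : ∃ (Y : FDRep ℂ G) (f : Y ⟶ V), Mono f ∧ f ≠ 0 ∧ ¬ IsIso f := by
        by_contra! hc
        apply hs
        refine ⟨fun {Y} f _ => ⟨fun hi h0 => ?_, fun h0 => hc Y f inferInstance h0⟩⟩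
        apply hid
        rw [← IsIso.inv_hom_id f]
        exact (congrArg (fun t => inv f ≫ t) h0).trans Limits.comp_zero
      obtain ⟨Y, f, hm, h0, hi⟩ := this
      have hlt := finrank_lt f hi
      obtain ⟨S, g, hS, hg⟩ := ih _ (hV ▸ hlt) Y rfl (by
        intro h
        apply h0
        apply linFD_ext
        have : Subsingleton Y := Module.finrank_zero_iff.1 h
        ext v
        rw [Subsingleton.elim v 0]; simp)
      refine ⟨S, g ≫ f, hS, fun h => hg ?_⟩
      rw [← cancel_mono f, h, Limits.zero_comp]

/-- external tensor product -/
noncomputable def extT {G₁ G₂ : Type} [Group G₁] [Group G₂] (V : FDRep ℂ G₁) (W : FDRep ℂ G₂) :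
    FDRep ℂ (G₁ × G₂) :=
  FDRep.of (V := TensorProduct ℂ V W)
    (Representation.tprod (MonoidHom.comp V.ρ (MonoidHom.fst G₁ G₂) : Representation ℂ (G₁ × G₂) V)
      (MonoidHom.comp W.ρ (MonoidHom.snd G₁ G₂) : Representation ℂ (G₁ × G₂) W))

theorem extT_char {G₁ G₂ : Type} [Group G₁] [Group G₂] (V : FDRep ℂ G₁) (W : FDRep ℂ G₂)
    (g : G₁ × G₂) : (extT V W).character g = V.character g.1 * W.character g.2 :=
  LinearMap.trace_tensorProduct' (V.ρ g.1) (W.ρ g.2)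

theorem extT_simple {G₁ G₂ : Type} [Group G₁] [Group G₂] [Fintype G₁] [Fintype G₂]
    (V : FDRep ℂ G₁) (W : FDRep ℂ G₂) (hV : Simple V) (hW : Simple W) : Simple (extT V W) := by
  rw [FDRep.simple_iff_char_is_norm_one] at *
  rw [Nat.card_prod, Nat.cast_mul, ← hV, ← hW, Finset.sum_mul_sum, Fintype.sum_prod_type]
  refine Finset.sum_congr rfl fun a _ => Finset.sum_congr rfl fun b _ => ?_
  simp only [extT_char, Prod.fst_inv, Prod.snd_inv]
  ring

theorem finrank_ne_of_simple {G : Type} [Group G] (V : FDRep ℂ G) (hV : Simple V) :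
    Module.finrank ℂ V ≠ 0 := by
  intro h
  have : Subsingleton V := Module.finrank_zero_iff.1 h
  apply id_nonzero V
  apply linFD_ext
  ext v
  exact Subsingleton.elim (α := V) _ _

theorem exists_factor {G₁ G₂ : Type} [Group G₁] [Group G₂] [Fintype G₁] [Fintype G₂]
    (V : FDRep ℂ (G₁ × G₂)) (hV : Simple V) : ∃ (V₁ : FDRep ℂ G₁) (V₂ : FDRep ℂ G₂),
      Simple V₁ ∧ Simple V₂ ∧ Nonempty (extT V₁ V₂ ≅ V) := by
  have hpos := finrank_ne_of_simple V hV
  let R₁ : Representation ℂ G₁ V := MonoidHom.comp V.ρ (MonoidHom.inl G₁ G₂)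
  obtain ⟨S, f, hS, hf⟩ := exists_simple _ (FDRep.of R₁) rfl hpos
  have hcomm : ∀ a b v, V.ρ (a, 1) (V.ρ (1, b) v) = V.ρ (1, b) (V.ρ (a, 1) v) := by
    intro a b v
    rw [← Module.End.mul_apply, ← Module.End.mul_apply, ← map_mul, ← map_mul]
    simp
  let H : Submodule ℂ (S →ₗ[ℂ] V) :=
    { carrier := {φ | ∀ g v, φ (S.ρ g v) = V.ρ (g, 1) (φ v)}
      add_mem' := by
        intro a b ha hb g v
        simp [ha g v, hb g v]
      zero_mem' := by intro g v; simp
      smul_mem' := by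
        intro c a ha g v
        simp [ha g v] }
  let R₂ : Representation ℂ G₂ H :=
    { toFun := fun g => 
        { toFun := fun φ => ⟨V.ρ (1, g) ∘ₗ φ.1, fun a v => by
            simp [φ.2 a v, hcomm]⟩
          map_add' := by intro a b; ext v; simp
          map_smul' := by intro a b; ext v; simp }
      map_one' := by
        ext φ v
        change V.ρ 1 _ = _
        simp
      map_mul' := by
        intro a b
        ext φ v
        change V.ρ (1, a * b) _ = V.ρ (1,a) (V.ρ (1, b) _)
        rw [← Module.End.mul_apply, ← map_mul]
        simp }
  have hlf : linFD f ≠ 0 := fun h => hf (linFD_ext h)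
  have hH : Module.finrank ℂ H ≠ 0 := by
    intro h
    have hs : Subsingleton H := Module.finrank_zero_iff.1 h
    have := Subsingleton.elim (⟨linFD f, fun g v => linFD_comm f g v⟩ : H) 0
    exact hlf (congrArg Subtype.val this)
  obtain ⟨T, k, hT, hk⟩ := exists_simple _ (FDRep.of R₂) rfl hH
  have hlk : linFD k ≠ 0 := fun h => hk (linFD_ext h)
  have hss := extT_simple S T hS hT
  let K : T →ₗ[ℂ] H := linFD k
  let m : TensorProduct ℂ S T →ₗ[ℂ] V := TensorProduct.lift ((H.subtype ∘ₗ K).flip)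
  have hm : ∀ s t, m (s ⊗ₜ t) = (K t).1 s := fun s t => rfl
  have hmc : ∀ (g : G₁ × G₂) v, m ((extT S T).ρ g v) = V.ρ g (m v) := by
    intro g v
    suffices h : m ∘ₗ TensorProduct.map (S.ρ g.1) (T.ρ g.2) = V.ρ g ∘ₗ m from
      LinearMap.congr_fun h v
    apply TensorProduct.ext'
    intro s t
    rw [LinearMap.comp_apply, LinearMap.comp_apply, TensorProduct.map_tmul, hm, hm,
      (K _).2 g.1 s]
    have h1 : K (T.ρ g.2 t) = R₂ g.2 (K t) := linFD_comm k g.2 t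
    rw [h1]
    change V.ρ (g.1, 1) (V.ρ (1, g.2) _) = _
    rw [← Module.End.mul_apply, ← map_mul]
    simp
  let M : extT S T ⟶ V := mkHomFD m hmc
  have hM : M ≠ 0 := by
    intro h
    have h' : m = 0 := congrArg linFD h
    apply hlk
    refine LinearMap.ext fun t => ?_
    refine Subtype.ext (LinearMap.ext fun s => ?_)
    change (K t).1 s = 0
    rw [← hm, h']; rfl
  have := isIso_of_hom_simple hM
  exact ⟨S, T, hS, hT, ⟨asIso M⟩⟩

theorem char_comp_equiv {G H : Type} [Group G] [Group H] [Fintype G] [Fintype H] (e : H ≃* G)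
    (V : FDRep ℂ G) (hV : Simple V) :
    ∃ W : FDRep ℂ H, Simple W ∧ ∀ h, W.character h = V.character (e h) := by
  refine ⟨FDRep.of (V := V) (MonoidHom.comp V.ρ e.toMonoidHom : Representation ℂ H V), ?_, fun h => rfl⟩
  rw [FDRep.simple_iff_char_is_norm_one] at *
  rw [Nat.card_congr e.toEquiv, ← hV, ← Equiv.sum_comp e.toEquiv]
  refine Finset.sum_congr rfl fun a _ => ?_
  change _ * V.character (e a⁻¹) = _ * V.character (e a)⁻¹
  rw [map_inv]; rfl

def prodQ {C A B : Type} [Group C] [Group A] [Group B] (e : C ≃* A × B) (Q₁ : Subgroup A)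
    (Q₂ : Subgroup B) : Subgroup C := (Q₁.prod Q₂).comap e.toMonoidHom

theorem mem_prodQ {C A B : Type} [Group C] [Group A] [Group B] (e : C ≃* A × B) (Q₁ : Subgroup A)
    (Q₂ : Subgroup B) (c : C) : c ∈ prodQ e Q₁ Q₂ ↔ (e c).1 ∈ Q₁ ∧ (e c).2 ∈ Q₂ := by
  simp [prodQ, Subgroup.mem_prod]

def prodQEquiv {C A B : Type} [Group C] [Group A] [Group B] (e : C ≃* A × B) (Q₁ : Subgroup A)
    (Q₂ : Subgroup B) : prodQ e Q₁ Q₂ ≃* Q₁ × Q₂ where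
  toFun c := (⟨(e c).1, ((mem_prodQ e Q₁ Q₂ c).1 c.2).1⟩, ⟨(e c).2, ((mem_prodQ e Q₁ Q₂ c).1 c.2).2⟩)
  invFun q := ⟨e.symm (q.1, q.2), by simp [mem_prodQ]⟩
  left_inv c := by simp
  right_inv q := by simp
  map_mul' a b := by simp

theorem prodQ_index {C A B : Type} [Group C] [Group A] [Group B] (e : C ≃* A × B)
    (Q₁ : Subgroup A) (Q₂ : Subgroup B) : (prodQ e Q₁ Q₂).index = Q₁.index * Q₂.index := by
  rw [prodQ, Subgroup.index_comap_of_surjective _ e.surjective, Subgroup.index_prod]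

noncomputable def prodLam {C A B : Type} [Group C] [Group A] [Group B] (e : C ≃* A × B)
    (Q₁ : Subgroup A) (Q₂ : Subgroup B) (f₁ : Q₁ → ℂ) (f₂ : Q₂ → ℂ) : prodQ e Q₁ Q₂ → ℂ :=
  fun c => f₁ (prodQEquiv e Q₁ Q₂ c).1 * f₂ (prodQEquiv e Q₁ Q₂ c).2

theorem prodLam_irr {C A B : Type} [Group C] [Group A] [Group B] [Fintype C] [Fintype A]
    [Fintype B] (e : C ≃* A × B)
    (Q₁ : Subgroup A) (Q₂ : Subgroup B) (f₁ : Q₁ → ℂ) (f₂ : Q₂ → ℂ)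
    (h₁ : IsIrreducibleCharacter f₁) (h₂ : IsIrreducibleCharacter f₂) :
    IsIrreducibleCharacter (prodLam e Q₁ Q₂ f₁ f₂) := by
  obtain ⟨V₁, s₁, rfl⟩ := h₁
  obtain ⟨V₂, s₂, rfl⟩ := h₂
  obtain ⟨W, hW, h⟩ := char_comp_equiv (prodQEquiv e Q₁ Q₂) _ (extT_simple V₁ V₂ s₁ s₂)
  refine ⟨W, hW, ?_⟩
  ext c
  rw [h, extT_char]; rfl

theorem inducedChar_prod {C A B : Type} [Group C] [Group A] [Group B] [Fintype C] [Fintype A]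
    [Fintype B] (e : C ≃* A × B)
    (Q₁ : Subgroup A) (Q₂ : Subgroup B) (f₁ : Q₁ → ℂ) (f₂ : Q₂ → ℂ) (c : C) :
    inducedChar (prodQ e Q₁ Q₂) (prodLam e Q₁ Q₂ f₁ f₂) c =
      inducedChar Q₁ f₁ (e c).1 * inducedChar Q₂ f₂ (e c).2 := by
  unfold inducedChar
  rw [Fintype.card_congr (prodQEquiv e Q₁ Q₂).toEquiv, Fintype.card_prod, Nat.cast_mul, mul_inv,
    mul_mul_mul_comm, Finset.sum_mul_sum, ← Fintype.sum_prod_type', ← Equiv.sum_comp e.toEquiv]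
  congr 1
  refine Finset.sum_congr rfl fun x _ => ?_
  have hx1 : (e (x * c * x⁻¹)).1 = (e x).1 * (e c).1 * (e x).1⁻¹ := by simp
  have hx2 : (e (x * c * x⁻¹)).2 = (e x).2 * (e c).2 * (e x).2⁻¹ := by simp
  have key := mem_prodQ e Q₁ Q₂ (x * c * x⁻¹)
  rw [hx1, hx2] at key
  simp only [MulEquiv.toEquiv_eq_coe, MulEquiv.coe_toEquiv]
  by_cases h1 : (e x).1 * (e c).1 * (e x).1⁻¹ ∈ Q₁
  · by_cases h2 : (e x).2 * (e c).2 * (e x).2⁻¹ ∈ Q₂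
    · rw [dif_pos h1, dif_pos h2, dif_pos (key.2 ⟨h1, h2⟩)]
      simp [prodLam, prodQEquiv]
    · rw [dif_neg h2, dif_neg (fun h => h2 (key.1 h).2), mul_zero]
  · rw [dif_neg h1, dif_neg (fun h => h1 (key.1 h).1), zero_mul]

end Helpers

theorem direct_product_reduction
    (p : ℕ) [Fact p.Prime]
    (G₁ G₂ : Type) [Group G₁] [Group G₂] [Fintype G₁] [Fintype G₂]
    (P₁ : Sylow p G₁) (P₂ : Sylow p G₂)
    -- the property holds for every irreducible character of `G₁` and of `G₂`:
    (h₁ : ∀ (V₁ : FDRep ℂ G₁), CategoryTheory.Simple V₁ →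
      ZSumInducedProperty p (P₁ : Subgroup G₁) V₁.character (Module.finrank ℂ V₁))
    (h₂ : ∀ (V₂ : FDRep ℂ G₂), CategoryTheory.Simple V₂ →
      ZSumInducedProperty p (P₂ : Subgroup G₂) V₂.character (Module.finrank ℂ V₂)) :
    -- then it holds for every irreducible character of `G₁ × G₂`
    -- with respect to the Sylow `p`-subgroup `P₁ × P₂`:
    ∀ (V : FDRep ℂ (G₁ × G₂)), CategoryTheory.Simple V →
      ZSumInducedProperty p ((P₁ : Subgroup G₁).prod (P₂ : Subgroup G₂))
        V.character (Module.finrank ℂ V) := by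
  intro V hV
  obtain ⟨V₁, V₂, s₁, s₂, ⟨i⟩⟩ := exists_factor V hV
  have hchar : ∀ g, V.character g = V₁.character g.1 * V₂.character g.2 := fun g => by
    rw [← FDRep.char_iso i, extT_char]
  have hdim : Module.finrank ℂ V = Module.finrank ℂ V₁ * Module.finrank ℂ V₂ := by
    have := hchar 1
    rw [Prod.fst_one, Prod.snd_one, FDRep.char_one, FDRep.char_one, FDRep.char_one] at this
    exact_mod_cast this
  have hd₁ := finrank_ne_of_simple V₁ s₁
  have hd₂ := finrank_ne_of_simple V₂ s₂
  obtain ⟨n₁, c₁, Q₁, l₁, a₁, b₁, e₁⟩ := h₁ V₁ s₁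
  obtain ⟨n₂, c₂, Q₂, l₂, a₂, b₂, e₂⟩ := h₂ V₂ s₂
  let e := Subgroup.prodEquiv (P₁ : Subgroup G₁) (P₂ : Subgroup G₂)
  let t := (finProdFinEquiv (m := n₁) (n := n₂)).symm
  refine ⟨n₁ * n₂, fun j => c₁ (t j).1 * c₂ (t j).2, fun j => prodQ e (Q₁ (t j).1) (Q₂ (t j).2),
    fun j => prodLam e _ _ (l₁ (t j).1) (l₂ (t j).2), ?_, ?_, ?_⟩
  · exact fun j => prodLam_irr e _ _ _ _ (a₁ _) (a₂ _)
  · intro j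
    rw [prodQ_index, ← b₁, ← b₂, hdim, Nat.factorization_mul hd₁ hd₂, ← pow_add]
    rfl
  · intro x
    have h1 : V₁.character (x : G₁ × G₂).1 = _ := e₁ (e x).1
    have h2 : V₂.character (x : G₁ × G₂).2 = _ := e₂ (e x).2
    rw [hchar, h1, h2, Finset.sum_mul_sum, ← Fintype.sum_prod_type', ← Equiv.sum_comp t]
    refine Finset.sum_congr rfl fun j _ => ?_
    rw [inducedChar_prod]
    push_cast
    ring
end

section
/- Let p be a prime, G a finite group, P a Sylow p-subgroup of G, and χ an irreducible complex character of G with kernel N = ker(χ). Let π : G → G/N be the quotient map, let χ̄ be the irreducible character of G/N with χ = χ̄ ∘ π, and note that P̄ := PN/N is a Sylow p-subgroup of G/N. Assume that the restriction of χ̄ to P̄ is an integral linear combination of characters of the form μ^{P̄} induced from irreducible characters μ of subgroups Q̄ ≤ P̄ with χ(1)_p = |G/N : Q̄|_p. Then χ_P is an integral linear combination of characters of the form λ^P induced from irreducible characters λ of subgroups Q ≤ P with χ(1)_p = |G : Q|_p. -/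
open scoped Classical

/-- The restriction of `χ` (a character of degree `d` of the ambient group `G`) to the
subgroup `P` is an integral (ℤ-) linear combination of characters `λ^P` induced from
irreducible characters `λ` of subgroups `Q ≤ P` satisfying `d_p = |G : Q|_p` (the
`p`-part of the degree equals the `p`-part of the index of `Q` in the ambient group). -/
def ZSumInducedPropertyAmb (p : ℕ) {G : Type} [Group G] [Fintype G] (P : Subgroup G)
    (χ : G → ℂ) (d : ℕ) : Prop :=
  ∃ (n : ℕ) (c : Fin n → ℤ) (Q : Fin n → Subgroup ↥P)
    (lam : (i : Fin n) → ↥(Q i) → ℂ),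
    (∀ i, IsIrreducibleCharacter (lam i)) ∧
    (∀ i, p ^ (d.factorization p) = p ^ ((((Q i).map P.subtype).index).factorization p)) ∧
    (∀ x : ↥P, χ ↑x = ∑ i, (c i : ℂ) * inducedChar (Q i) (lam i) x)


theorem aux_sum_comp {K H : Type} [Group K] [Group H] [Fintype K] [Fintype H] (f : K →* H)
    (hf : Function.Surjective f) (F : H → ℂ) :
    (Fintype.card H : ℂ) * ∑ k, F (f k) = (Fintype.card K : ℂ) * ∑ h, F h := by
  have key : ∀ h : H, (Finset.univ.filter (fun k => f k = h)).card
      = (Finset.univ.filter (fun k => f k = 1)).card := fun h =>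
    MonoidHom.card_fiber_eq_of_mem_range f (hf h) (hf 1)
  have h2 : ∀ F : H → ℂ, ∑ k, F (f k)
      = ((Finset.univ.filter (fun k => f k = 1)).card : ℂ) * ∑ h, F h := by
    intro F
    rw [← Finset.sum_fiberwise (s := Finset.univ) (g := f) (f := fun k => F (f k)),
      Finset.mul_sum]
    refine Finset.sum_congr rfl fun h _ => ?_
    rw [← key h, ← nsmul_eq_mul, ← Finset.sum_const]
    refine Finset.sum_congr rfl fun k hk => ?_
    rw [(Finset.mem_filter.1 hk).2]
  have h3 := h2 (fun _ => 1)
  simp only [Finset.sum_const, nsmul_eq_mul, mul_one, Finset.card_univ] at h3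
  rw [h2, h3]; ring

theorem aux_irr {K H : Type} [Group K] [Group H] [Fintype K] [Fintype H] (f : K →* H)
    (hf : Function.Surjective f) (μ : H → ℂ) (hμ : IsIrreducibleCharacter μ) :
    IsIrreducibleCharacter (fun k => μ (f k)) := by
  obtain ⟨V, hV, rfl⟩ := hμ
  refine ⟨FDRep.of (V.ρ.comp f), ?_, rfl⟩
  rw [FDRep.simple_iff_char_is_norm_one] at hV ⊢
  have h := aux_sum_comp f hf (fun h => V.character h * V.character h⁻¹)
  rw [hV, Nat.card_eq_fintype_card] at h
  have hne : (Fintype.card H : ℂ) ≠ 0 := by exact_mod_cast Fintype.card_ne_zero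
  rw [mul_comm, mul_left_inj' hne] at h
  rw [Nat.card_eq_fintype_card, ← h]
  refine Finset.sum_congr rfl fun k _ => ?_
  rw [← map_inv]; rfl

theorem aux_ind {K H : Type} [Group K] [Group H] [Fintype K] [Fintype H] (f : K →* H)
    (hf : Function.Surjective f) (Q : Subgroup H) (μ : Q → ℂ) (k : K) :
    inducedChar (Q.comap f) (fun q => μ (f.subgroupComap Q q)) k = inducedChar Q μ (f k) := by
  have hs : Function.Surjective (f.subgroupComap Q) := by
    rintro ⟨q, hq⟩
    obtain ⟨k, rfl⟩ := hf q
    exact ⟨⟨k, hq⟩, rfl⟩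
  have h := aux_sum_comp f hf (fun y => if h : y * f k * y⁻¹ ∈ Q then μ ⟨y * f k * y⁻¹, h⟩ else 0)
  have hc : Fintype.card (Q.comap f) * Fintype.card H = Fintype.card Q * Fintype.card K := by
    have h1 := Subgroup.index_comap_of_surjective Q hf
    have h2 := (Q.comap f).card_mul_index
    have h3 := Q.card_mul_index
    simp only [Nat.card_eq_fintype_card] at h2 h3
    rw [← h2, ← h3, h1]; ring
  have hc' : (Fintype.card (Q.comap f) : ℂ) * Fintype.card H
      = Fintype.card Q * Fintype.card K := by exact_mod_cast hc
  have n1 : (Fintype.card H : ℂ) ≠ 0 := by exact_mod_cast Fintype.card_ne_zero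
  have n2 : (Fintype.card K : ℂ) ≠ 0 := by exact_mod_cast Fintype.card_ne_zero
  have n3 : (Fintype.card Q : ℂ) ≠ 0 := by exact_mod_cast Fintype.card_ne_zero
  have n4 : (Fintype.card (Q.comap f) : ℂ) ≠ 0 := by exact_mod_cast Fintype.card_ne_zero
  have e : (∑ x : K, if h : x * k * x⁻¹ ∈ Q.comap f then
      μ (f.subgroupComap Q ⟨x * k * x⁻¹, h⟩) else 0)
      = ∑ x : K, (fun y => if h : y * f k * y⁻¹ ∈ Q then μ ⟨y * f k * y⁻¹, h⟩ else 0) (f x) := by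
    refine Finset.sum_congr rfl fun x _ => ?_
    have hx : f (x * k * x⁻¹) = f x * f k * (f x)⁻¹ := by simp
    by_cases hm : f x * f k * (f x)⁻¹ ∈ Q
    · have hm' : x * k * x⁻¹ ∈ Q.comap f := by rw [Subgroup.mem_comap, hx]; exact hm
      simp only [dif_pos hm, dif_pos hm']
      congr 1
      exact Subtype.ext hx
    · have hm' : x * k * x⁻¹ ∉ Q.comap f := by rw [Subgroup.mem_comap, hx]; exact hm
      simp only [dif_neg hm, dif_neg hm']
  unfold inducedChar
  rw [e]
  generalize (∑ x : K, (fun y => if h : y * f k * y⁻¹ ∈ Q then μ ⟨y * f k * y⁻¹, h⟩ else 0) (f x)) = A at *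
  generalize (∑ y : H, if h : y * f k * y⁻¹ ∈ Q then μ ⟨y * f k * y⁻¹, h⟩ else 0) = B at *
  rw [inv_mul_eq_iff_eq_mul₀ n4]
  have : (Fintype.card H : ℂ) * Fintype.card Q * A = Fintype.card H * Fintype.card (Q.comap f) * B := by
    linear_combination (Fintype.card Q : ℂ) * h - B * hc'
  field_simp
  have h5 := mul_left_cancel₀ n1 ((mul_assoc _ _ _).symm.trans (this.trans (mul_assoc _ _ _)))
  linear_combination h5

theorem reduction_to_faithful_quotient
    (p : ℕ) [Fact p.Prime] (G : Type) [Group G] [Fintype G]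
    (P : Sylow p G) (V : FDRep ℂ G) (hV : CategoryTheory.Simple V)
    -- `N` is the kernel of the character `χ = V.character`:
    (N : Subgroup G) [N.Normal]
    (hker : ∀ g : G, g ∈ N ↔ V.character g = V.character 1)
    -- `χ̄` is the irreducible character of `G ⧸ N` with `χ = χ̄ ∘ π`:
    (χbar : G ⧸ N → ℂ) (hχbar : IsIrreducibleCharacter χbar)
    (hfac : ∀ g : G, V.character g = χbar (g : G ⧸ N))
    -- assume the conclusion for `χ̄` and the Sylow `p`-subgroup `P̄ = PN/N` of `G ⧸ N`:
    (hyp : ZSumInducedPropertyAmb p ((P : Subgroup G).map (QuotientGroup.mk' N)) χbar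
      (Module.finrank ℂ V)) :
    ZSumInducedPropertyAmb p (P : Subgroup G) V.character (Module.finrank ℂ V) := by
  obtain ⟨n, c, Q, lam, h1, h2, h3⟩ := hyp
  let f : (P : Subgroup G) →* ((P : Subgroup G).map (QuotientGroup.mk' N)) :=
    (QuotientGroup.mk' N).subgroupMap (P : Subgroup G)
  have hf : Function.Surjective f := (QuotientGroup.mk' N).subgroupMap_surjective _
  refine ⟨n, c, fun i => (Q i).comap f, fun i q => lam i (f.subgroupComap (Q i) q), ?_, ?_, ?_⟩
  · intro i
    refine aux_irr (f.subgroupComap (Q i)) ?_ (lam i) (h1 i)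
    rintro ⟨q, hq⟩
    obtain ⟨k, rfl⟩ := hf q
    exact ⟨⟨k, hq⟩, rfl⟩
  · intro i
    rw [h2 i]
    congr 1
    have hP : ¬ p ∣ (P : Subgroup G).index := P.not_dvd_index
    have hP' : ¬ p ∣ ((P : Subgroup G).map (QuotientGroup.mk' N)).index := fun h =>
      hP (h.trans (Subgroup.index_map_dvd _ (QuotientGroup.mk'_surjective N)))
    rw [Subgroup.index_map_subtype, Subgroup.index_map_subtype,
      Subgroup.index_comap_of_surjective _ hf,
      Nat.factorization_mul Subgroup.index_ne_zero_of_finite Subgroup.index_ne_zero_of_finite,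
      Nat.factorization_mul Subgroup.index_ne_zero_of_finite Subgroup.index_ne_zero_of_finite,
      Finsupp.add_apply, Finsupp.add_apply, Nat.factorization_eq_zero_of_not_dvd hP,
      Nat.factorization_eq_zero_of_not_dvd hP']
  · intro x
    rw [hfac]
    refine (h3 (f x)).trans (Finset.sum_congr rfl fun i _ => ?_)
    rw [aux_ind f hf]
end

section
/- Let G be a finite group and let χ be an irreducible complex character of G that is faithful (ker(χ) = 1) and primitive (χ is not of the form ψ^G for any irreducible character ψ of any proper subgroup of G). Then every abelian normal subgroup N of G is cyclic and contained in the center Z(G) of G. -/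
open scoped Classical

open CategoryTheory in
theorem aux_inv {G : Type} [Group G] (V : FDRep ℂ G) (hV : Simple V)
    (U : Submodule ℂ V) (hU : ∀ g, ∀ u ∈ U, V.ρ g u ∈ U) (hne : U ≠ ⊥) : U = ⊤ := by
  let σ : Representation ℂ G U := (Subrepresentation.mk (ρ := V.ρ) U hU).toRepresentation
  let f : FDRep.of σ ⟶ V := ⟨InducedCategory.homMk (ModuleCat.ofHom U.subtype), fun g => by
    ext1
    rfl⟩
  have hmono : Mono f := by
    refine (forget₂ (FDRep ℂ G) (Rep ℂ G)).mono_of_mono_map ?_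
    rw [Rep.mono_iff_injective]
    exact U.injective_subtype
  have hf : f ≠ 0 := by
    intro h
    apply hne
    rw [Submodule.eq_bot_iff]
    intro u hu
    have := congrArg (fun f : FDRep.of σ ⟶ V => f.hom.hom.hom ⟨u, hu⟩) h
    exact this
  have hi : IsIso f := (Simple.mono_isIso_iff_nonzero f).2 hf
  rw [Submodule.eq_top_iff']
  intro v
  have h2 : (inv f ≫ f).hom.hom.hom v = v := by
    rw [IsIso.inv_hom_id]; rfl
  have h3 : (inv f ≫ f).hom.hom.hom v = ((inv f).hom.hom.hom v : U).1 := rfl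
  rw [← h2, h3]
  exact Subtype.property _

theorem aux_simple {G : Type} [Group G] [Fintype G] {W : Type} [AddCommGroup W] [Module ℂ W]
    [FiniteDimensional ℂ W] (σ : Representation ℂ G W) [σ.IsIrreducible] :
    CategoryTheory.Simple (FDRep.of σ) := by
  have : Invertible (Nat.card G : ℂ) := invertibleOfNonzero (by simp)
  rw [FDRep.simple_iff_char_is_norm_one]
  have := Representation.char_orthonormal σ σ
  rw [if_pos ⟨.refl _⟩, inv_mul_eq_iff_eq_mul₀ (by simp), mul_one] at this
  simpa using! this

theorem aux_ind_s7 {G : Type} [Group G] [Fintype G] {M : Type} [AddCommGroup M] [Module ℂ M]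
    [FiniteDimensional ℂ M] (ρ : Representation ℂ G M)
    (hirr : ∀ U : Submodule ℂ M, (∀ g, ∀ u ∈ U, ρ g u ∈ U) → U ≠ ⊥ → U = ⊤)
    (W : Submodule ℂ M) (hW : W ≠ ⊥) (p : M →ₗ[ℂ] M) (hp1 : ∀ v, p v ∈ W)
    (hp2 : ∀ w ∈ W, p w = w) (H : Subgroup G) (hH : ∀ h ∈ H, ∀ w ∈ W, ρ h w ∈ W)
    (hH' : ∀ x, x ∉ H → ∀ w ∈ W, p (ρ x w) = 0) :
    ∃ ψ : H → ℂ, IsIrreducibleCharacter ψ ∧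
      ∀ g : G, LinearMap.trace ℂ M (ρ g) = inducedChar H ψ g := by
  let σ : Representation ℂ H W := (Subrepresentation.mk (ρ := ρ.comp H.subtype) W
    (fun h w hw => hH h h.2 w hw)).toRepresentation
  obtain ⟨w0, hw0, hw0'⟩ := (Submodule.ne_bot_iff W).1 hW
  have hσ : σ.IsIrreducible := by
    have hnt : Nontrivial (Subrepresentation σ) := by
      refine ⟨⊥, ⊤, fun h => hw0' ?_⟩
      have h1 : (⟨w0, hw0⟩ : W) ∈ (⊤ : Subrepresentation σ).toSubmodule :=
        Submodule.mem_top (R := ℂ)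
      rw [← h] at h1
      have h2 := (Submodule.mem_bot ℂ).1 h1
      exact congrArg Subtype.val h2
    refine { eq_bot_or_eq_top := fun S => ?_ }
    by_cases hS : S.toSubmodule = ⊥
    · left; exact Subrepresentation.toSubmodule_injective hS
    right
    apply Subrepresentation.toSubmodule_injective
    change S.toSubmodule = ⊤
    obtain ⟨s, hs, hs'⟩ := (Submodule.ne_bot_iff _).1 hS
    let U : Submodule ℂ M := Submodule.span ℂ {v | ∃ g : G, ∃ u ∈ S.toSubmodule, ρ g u.1 = v}
    have hU : U = ⊤ := by
      apply hirr
      · intro g u hu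
        have hle : U ≤ U.comap (ρ g) := by
          refine Submodule.span_le.2 ?_
          rintro _ ⟨x, u, hu, rfl⟩
          refine Submodule.subset_span ⟨g * x, u, hu, ?_⟩
          simp
        exact hle hu
      · refine (Submodule.ne_bot_iff _).2 ⟨s.1, Submodule.subset_span ⟨1, s, hs, by simp⟩, ?_⟩
        simpa using hs'
    have hle : U ≤ (S.toSubmodule.map W.subtype).comap p := by
      refine Submodule.span_le.2 ?_
      rintro _ ⟨x, u, hu, rfl⟩
      by_cases hx : x ∈ H
      · refine ⟨σ ⟨x, hx⟩ u, S.apply_mem_toSubmodule _ hu, ?_⟩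
        exact (hp2 _ (hH x hx _ u.2)).symm
      · simp [hH' x hx u.1 u.2]
    rw [Submodule.eq_top_iff']
    intro w
    have h1 : w.1 ∈ U := by rw [hU]; trivial
    obtain ⟨y, hy, hy'⟩ := hle h1
    rw [hp2 _ w.2] at hy'
    have : y = w := Subtype.ext hy'
    exact this ▸ hy
  refine ⟨FDRep.character (FDRep.of σ), ⟨_, aux_simple σ, rfl⟩, fun g => ?_⟩
  have htr : ∀ x : G, LinearMap.trace ℂ M (p ∘ₗ ρ x) =
      if h : x ∈ H then FDRep.character (FDRep.of σ) ⟨x, h⟩ else 0 := by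
    intro x
    have h1 : p ∘ₗ ρ x = W.subtype ∘ₗ (p.codRestrict W hp1 ∘ₗ ρ x) := by ext; simp
    rw [h1, LinearMap.trace_comp_comm']
    split_ifs with hx
    · change _ = LinearMap.trace ℂ W (σ ⟨x, hx⟩)
      congr 1
      ext w
      exact hp2 _ (hH x hx _ w.2)
    · convert! map_zero (LinearMap.trace ℂ W)
      ext w
      exact hH' x hx w.1 w.2
  let T : M →ₗ[ℂ] M := ∑ x : G, ρ x⁻¹ ∘ₗ p ∘ₗ ρ x
  have hTv : ∀ v, T v = ∑ x : G, ρ x⁻¹ (p (ρ x v)) := fun v => by simp [T]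
  have hcomm : ∀ g v, T (ρ g v) = ρ g (T v) := by
    intro g v
    rw [hTv, hTv, map_sum]
    refine Fintype.sum_equiv (Equiv.mulRight g) _ _ fun x => ?_
    simp
  have hTw : T w0 = (Fintype.card H : ℂ) • w0 := by
    rw [hTv]
    have : ∀ x : G, ρ x⁻¹ (p (ρ x w0)) = if x ∈ H then w0 else 0 := by
      intro x
      split_ifs with hx
      · rw [hp2 _ (hH x hx _ hw0)]; simp [← Module.End.mul_apply, ← map_mul]
      · rw [hH' x hx _ hw0, map_zero]
    simp only [this]
    rw [Finset.sum_ite, Finset.sum_const, Finset.sum_const_zero, add_zero, Fintype.card_subtype,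
      Nat.cast_smul_eq_nsmul]
  have hTop : Module.End.eigenspace T (Fintype.card H : ℂ) = ⊤ := by
    apply hirr
    · intro g u hu
      rw [Module.End.mem_eigenspace_iff] at hu ⊢
      rw [hcomm, hu, map_smul]
    · exact (Submodule.ne_bot_iff _).2 ⟨w0, Module.End.mem_eigenspace_iff.2 hTw, hw0'⟩
  have hT : T = (Fintype.card H : ℂ) • LinearMap.id := by
    ext v
    have : v ∈ Module.End.eigenspace T (Fintype.card H : ℂ) := by rw [hTop]; trivial
    exact Module.End.mem_eigenspace_iff.1 this
  have hc : (Fintype.card H : ℂ) ≠ 0 := by simp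
  have key : LinearMap.trace ℂ M (T ∘ₗ ρ g) = (Fintype.card H : ℂ) * LinearMap.trace ℂ M (ρ g) := by
    rw [hT, LinearMap.smul_comp, map_smul, LinearMap.id_comp, smul_eq_mul]
  unfold inducedChar
  rw [eq_inv_mul_iff_mul_eq₀ hc, ← key]
  have h2 : T ∘ₗ ρ g = ∑ x : G, ρ x⁻¹ ∘ₗ (p ∘ₗ ρ x ∘ₗ ρ g) := by
    ext v; simp [T]
  rw [h2, map_sum]
  refine Finset.sum_congr rfl fun x _ => ?_
  rw [← htr, LinearMap.trace_comp_comm']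
  congr 1
  ext v
  simp

theorem aux_scalar {M : Type} [AddCommGroup M] [Module ℂ M]
    [FiniteDimensional ℂ M] (f : Module.End ℂ M) (n : ℕ) (hn : n ≠ 0) (hf : f ^ n = 1) (c : ℂ)
    (h : f.maxGenEigenspace c = ⊤) (v : M) : f v = c • v := by
  have hs : f.IsSemisimple := by
    apply Module.End.isSemisimple_of_squarefree_aeval_eq_zero
      (p := (Polynomial.X ^ n - 1 : Polynomial ℂ))
    · exact (Polynomial.X_pow_sub_one_separable_iff.2 (by exact_mod_cast hn)).squarefree
    · simp [hf]
  rw [hs.isFinitelySemisimple.maxGenEigenspace_eq_eigenspace] at h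
  exact Module.End.mem_eigenspace_iff.1 (h ▸ Submodule.mem_top)

theorem abelian_normal_subgroup_cyclic_central_of_faithful_primitive
    (G : Type) [Group G] [Fintype G]
    (V : FDRep ℂ G) (hV : CategoryTheory.Simple V)
    -- `χ = V.character` is faithful: its kernel is trivial.
    (hfaith : ∀ g : G, V.character g = V.character 1 → g = 1)
    -- `χ` is primitive: it is not induced from any proper subgroup.
    (hprim : ¬ ∃ (H : Subgroup G), H ≠ ⊤ ∧ ∃ (ψ : ↥H → ℂ),
      IsIrreducibleCharacter ψ ∧ ∀ g : G, V.character g = inducedChar H ψ g)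
    (N : Subgroup G) (hN : N.Normal)
    (habel : ∀ a ∈ N, ∀ b ∈ N, a * b = b * a) :
    IsCyclic ↥N ∧ N ≤ Subgroup.center G := by
  have hirr := aux_inv V hV
  have hinj : ∀ a b : G, V.ρ a = V.ρ b → a = b := by
    intro a b hab
    rw [← inv_mul_eq_one (a := a)]
    apply hfaith
    have : V.ρ (a⁻¹ * b) = V.ρ 1 := by
      rw [map_mul, ← hab, ← map_mul, inv_mul_cancel]
    simp only [FDRep.character, this]
  have hnt : Nontrivial V := by
    by_contra h
    rw [not_nontrivial_iff_subsingleton] at h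
    refine CategoryTheory.Simple.not_isZero V ?_
    rw [CategoryTheory.Limits.IsZero.iff_id_eq_zero]
    ext v
    exact Subsingleton.elim (α := V) _ _
  let f : N → Module.End ℂ V := fun n => V.ρ n.1
  let Wt : (N → ℂ) → Submodule ℂ V := fun μ => ⨅ n, (f n).maxGenEigenspace (μ n)
  have hcm : ∀ a b, Commute (f a) (f b) := by
    intro a b
    change V.ρ a.1 * V.ρ b.1 = V.ρ b.1 * V.ρ a.1
    rw [← map_mul, ← map_mul, habel _ a.2 _ b.2]
  have hsup : ⨆ μ, Wt μ = ⊤ :=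
    Module.End.iSup_iInf_maxGenEigenspace_eq_top_of_iSup_maxGenEigenspace_eq_top_of_commute f
      (fun a b _ => hcm a b) (fun a => Module.End.iSup_maxGenEigenspace_eq_top _)
  have hind : iSupIndep Wt :=
    Module.End.independent_iInf_maxGenEigenspace_of_forall_mapsTo f
      (fun a b φ => Module.End.mapsTo_maxGenEigenspace_of_comm (hcm b a) φ)
  obtain ⟨μ, hμ⟩ : ∃ μ, Wt μ ≠ ⊥ := by
    by_contra! h
    simp [h] at hsup
  let cj : G → N → N := fun x n => ⟨x⁻¹ * n.1 * x, by
    simpa using hN.conj_mem n.1 n.2 x⁻¹⟩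
  have hmove : ∀ (x : G) (ν : N → ℂ), ∀ w ∈ Wt ν, V.ρ x w ∈ Wt (fun n => ν (cj x n)) := by
    intro x ν w hw
    rw [Module.End.mem_iInf_maxGenEigenspace_iff] at hw ⊢
    intro n
    obtain ⟨k, hk⟩ := hw (cj x n)
    refine ⟨k, ?_⟩
    have hsc : SemiconjBy (V.ρ x) (f (cj x n) - ν (cj x n) • (1 : Module.End ℂ V))
        (f n - ν (cj x n) • (1 : Module.End ℂ V)) := by
      apply SemiconjBy.sub_right
      · change V.ρ x * V.ρ _ = V.ρ _ * V.ρ x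
        rw [← map_mul, ← map_mul]
        congr 1
        simp [cj, mul_assoc]
      · change _ * _ = _ * _
        simp
    have h2 := (hsc.pow_right k).eq
    have h3 := LinearMap.congr_fun h2 w
    rw [Module.End.mul_apply, Module.End.mul_apply, hk, map_zero] at h3
    exact h3.symm
  let H : Subgroup G :=
    { carrier := {x | ∀ n, μ (cj x n) = μ n}
      one_mem' := fun n => by simp [cj]
      mul_mem' := fun {a b} ha hb n => by
        have : cj (a * b) n = cj b (cj a n) := by simp [cj, mul_assoc]
        rw [this, hb, ha]
      inv_mem' := fun {a} ha n => by
        have h1 := ha (cj a⁻¹ n)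
        have : cj a (cj a⁻¹ n) = n := by simp [cj, mul_assoc]
        rw [this] at h1
        exact h1.symm }
  have hH : ∀ h ∈ H, ∀ w ∈ Wt μ, V.ρ h w ∈ Wt μ := by
    intro h hh w hw
    have h1 := hmove h μ w hw
    rwa [show (fun n => μ (cj h n)) = μ from funext hh] at h1
  have hcompl : IsCompl (Wt μ) (⨆ (ν) (_ : ν ≠ μ), Wt ν) := by
    refine ⟨hind μ, codisjoint_iff.2 ?_⟩
    rw [eq_top_iff, ← hsup]
    refine iSup_le fun ν => ?_
    by_cases h : ν = μ
    · subst h; exact le_sup_left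
    · exact le_sup_of_le_right (le_iSup₂_of_le ν h le_rfl)
  have hHtop : H = ⊤ := by
    by_contra hne
    refine hprim ⟨H, hne, ?_⟩
    refine aux_ind_s7 V.ρ hirr (Wt μ) hμ
      ((Wt μ).subtype ∘ₗ Submodule.projectionOnto _ _ hcompl) (fun v => ?_) (fun w hw => ?_)
      H hH (fun x hx w hw => ?_)
    · exact Subtype.property _
    · have := Submodule.projectionOnto_apply_left hcompl ⟨w, hw⟩
      exact congrArg Subtype.val this
    · have hm := hmove x μ w hw
      have hne : (fun n => μ (cj x n)) ≠ μ := fun h => hx fun n => congrFun h n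
      have hm2 : V.ρ x w ∈ (⨆ (ν) (_ : ν ≠ μ), Wt ν) :=
        (le_iSup₂_of_le (f := fun ν (_ : ν ≠ μ) => Wt ν) _ hne le_rfl) hm
      have := (Submodule.projectionOnto_apply_eq_zero_iff hcompl).2 hm2
      rw [LinearMap.comp_apply, this, map_zero]
  have hWtop : Wt μ = ⊤ := hirr _ (fun g u hu => hH g (by rw [hHtop]; trivial) u hu) hμ
  have hsc : ∀ (n : N) (v : V), V.ρ n.1 v = μ n • v := by
    intro n v
    refine aux_scalar (V.ρ n.1) (Fintype.card G) Fintype.card_ne_zero ?_ (μ n) ?_ v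
    · rw [← map_pow, pow_card_eq_one, map_one]
    · rw [eq_top_iff, ← hWtop]
      exact iInf_le _ n
  obtain ⟨v0, hv0⟩ := exists_ne (0 : V)
  constructor
  · let F : N →* ℂ :=
      { toFun := μ
        map_one' := by
          have := hsc 1 v0
          apply smul_left_injective ℂ hv0
          simp only [← this]; simp
        map_mul' := fun a b => by
          apply smul_left_injective ℂ hv0
          change μ (a * b) • v0 = (μ a * μ b) • v0
          rw [← hsc, mul_smul, ← hsc b, ← hsc a]
          simp }
    refine isCyclic_of_injective_ringHom F fun a b hab => ?_
    apply Subtype.ext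
    apply hinj
    ext v
    rw [hsc, hsc]
    exact congrArg (· • v) hab
  · intro n hn
    rw [Subgroup.mem_center_iff]
    intro g
    apply hinj
    ext v
    have h1 := hsc ⟨n, hn⟩
    simp only at h1
    rw [map_mul, map_mul, Module.End.mul_apply, Module.End.mul_apply, h1, h1, map_smul]
end

section
/- Let p be a prime and G a finite group. Assume that for every Sylow p-subgroup P of G and every irreducible character χ of G, the restriction χ_P is a sum of characters of the form λ^P induced from irreducible characters λ of subgroups Q ≤ P with χ(1)_p = |G : Q|_p. Then for every normal subgroup N of G, the quotient G/N has the same property: for every Sylow p-subgroup P̄ of G/N and every irreducible character χ̄ of G/N, the restriction χ̄_{P̄} is a sum of characters of the form μ^{P̄} induced from irreducible characters μ of subgroups Q̄ ≤ P̄ with χ̄(1)_p = |G/N : Q̄|_p. -/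
open scoped Classical

/-- The restriction of `χ` (a character of degree `d` of the ambient group `G`) to the
subgroup `P` is a sum of characters `λ^P` induced from irreducible characters `λ` of
subgroups `Q ≤ P` satisfying `d_p = |G : Q|_p` (the `p`-part of the degree equals the
`p`-part of the index of `Q` in the ambient group). -/
def SumInducedPropertyAmb (p : ℕ) {G : Type} [Group G] [Fintype G] (P : Subgroup G)
    (χ : G → ℂ) (d : ℕ) : Prop :=
  ∃ (n : ℕ) (Q : Fin n → Subgroup ↥P) (lam : (i : Fin n) → ↥(Q i) → ℂ),
    (∀ i, IsIrreducibleCharacter (lam i)) ∧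
    (∀ i, p ^ (d.factorization p) = p ^ ((((Q i).map P.subtype).index).factorization p)) ∧
    (∀ x : ↥P, χ ↑x = ∑ i, inducedChar (Q i) (lam i) x)

theorem aux_sum_subgroup {G : Type} [Group G] [Fintype G] (H : Subgroup G) (F : G → ℂ) :
    ∑ x : H, F x = ∑ z : G, if z ∈ H then F z else 0 := by
  rw [← Finset.sum_filter]
  exact (Finset.sum_subtype _ (by simp) F).symm

theorem aux_sum_comp_s8 {A B : Type} [Group A] [Group B] [Fintype A] [Fintype B] (f : A →* B)
    (hf : Function.Surjective f) :
    ∃ c : ℕ, 0 < c ∧ Fintype.card A = c * Fintype.card B ∧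
      ∀ F : B → ℂ, ∑ a, F (f a) = c * ∑ b, F b := by
  have hc : ∀ b : B, (Finset.univ.filter (fun a => f a = b)).card
      = (Finset.univ.filter (fun a => f a = 1)).card := fun b =>
    MonoidHom.card_fiber_eq_of_mem_range f (hf b) (hf 1)
  refine ⟨(Finset.univ.filter (fun a => f a = 1)).card, ?_, ?_, ?_⟩
  · exact Finset.card_pos.mpr ⟨1, by simp⟩
  · rw [← Finset.card_univ, Finset.card_eq_sum_card_fiberwise (f := f) (t := Finset.univ)
      (by intro x _; simp)]
    simp only [hc]
    simp [mul_comm]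
  · intro F
    rw [← Finset.sum_fiberwise Finset.univ f, Finset.mul_sum]
    refine Finset.sum_congr rfl fun b _ => ?_
    rw [← hc b, ← nsmul_eq_mul, ← Finset.sum_const]
    refine Finset.sum_congr rfl fun a ha => ?_
    rw [(Finset.mem_filter.mp ha).2]

theorem aux_simple_iff_s8 {A B : Type} [Group A] [Group B] [Fintype A] [Fintype B] (f : A →* B)
    (hf : Function.Surjective f) (V : FDRep ℂ A) (W : FDRep ℂ B)
    (h : ∀ a, V.character a = W.character (f a)) :
    CategoryTheory.Simple V ↔ CategoryTheory.Simple W := by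
  rw [FDRep.simple_iff_char_is_norm_one, FDRep.simple_iff_char_is_norm_one]
  obtain ⟨c, hc, hcard, hs⟩ := aux_sum_comp_s8 f hf
  have := hs (fun b => W.character b * W.character b⁻¹)
  simp only [h, map_inv]
  rw [this]
  have hc' : (c : ℂ) ≠ 0 := by exact_mod_cast hc.ne'
  simp only [← Fintype.card_eq_nat_card, hcard]
  push_cast
  constructor
  · intro h; exact mul_left_cancel₀ hc' h
  · intro h; rw [h]

theorem aux_induced {A B : Type} [Group A] [Group B] [Fintype A] [Fintype B] (f : A →* B)
    (hf : Function.Surjective f) (Q : Subgroup A) (hQ : f.ker ≤ Q) (l : Q → ℂ)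
    (m : Q.map f → ℂ) (h : ∀ q : Q, l q = m (f.subgroupMap Q q)) (x : A) :
    inducedChar Q l x = inducedChar (Q.map f) m (f x) := by
  obtain ⟨c, hc, hcard, hs⟩ := aux_sum_comp_s8 f hf
  have hc' : (c : ℂ) ≠ 0 := by exact_mod_cast hc.ne'
  have hmem : ∀ a, f a ∈ Q.map f ↔ a ∈ Q := by
    intro a
    constructor
    · rintro ⟨q, hq, hqa⟩
      have : q⁻¹ * a ∈ Q := hQ (by rw [MonoidHom.mem_ker, map_mul, map_inv, hqa]; simp)
      simpa using Q.mul_mem hq this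
    · intro h; exact ⟨a, h, rfl⟩
  have hcQ : Fintype.card Q = c * Fintype.card (Q.map f) := by
    have h1 := Subgroup.card_mul_index Q
    have h2 := Subgroup.card_mul_index (Q.map f)
    rw [Subgroup.index_map_eq Q hf hQ] at h2
    simp only [Fintype.card_eq_nat_card] at *
    have h3 : Q.index ≠ 0 := Subgroup.index_ne_zero_of_finite
    apply Nat.eq_of_mul_eq_mul_right (Nat.pos_of_ne_zero h3)
    rw [h1, mul_assoc, h2, hcard]
  unfold inducedChar
  have := hs (fun y => if h : y * f x * y⁻¹ ∈ Q.map f then m ⟨y * f x * y⁻¹, h⟩ else 0)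
  have e : ∀ y : A, (if h : y * x * y⁻¹ ∈ Q then l ⟨y * x * y⁻¹, h⟩ else 0)
     = (if h : f y * f x * (f y)⁻¹ ∈ Q.map f then m ⟨f y * f x * (f y)⁻¹, h⟩ else 0) := by
    intro y
    have e1 : f y * f x * (f y)⁻¹ = f (y * x * y⁻¹) := by simp
    by_cases hy : y * x * y⁻¹ ∈ Q
    · have hy' : f y * f x * (f y)⁻¹ ∈ Q.map f := by rw [e1, hmem]; exact hy
      rw [dif_pos hy, dif_pos hy', h]
      congr 1
      exact Subtype.ext e1.symm
    · have hy' : f y * f x * (f y)⁻¹ ∉ Q.map f := by rw [e1, hmem]; exact hy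
      rw [dif_neg hy, dif_neg hy']
  rw [Finset.sum_congr rfl (fun y _ => e y), this, hcQ]
  push_cast
  field_simp

theorem aux_induced_one {P : Type} [Group P] [Fintype P] (Q : Subgroup P) (l : Q → ℂ) :
    inducedChar Q l 1 = (Q.index : ℂ) * l 1 := by
  unfold inducedChar
  have e : ∀ y : P, (if h : y * 1 * y⁻¹ ∈ Q then l ⟨y * 1 * y⁻¹, h⟩ else 0) = l 1 := by
    intro y
    rw [dif_pos (by simp)]
    congr 1
    exact Subtype.ext (by simp)
  rw [Finset.sum_congr rfl (fun y _ => e y)]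
  have h1 := Subgroup.card_mul_index Q
  simp only [Finset.sum_const, Finset.card_univ, nsmul_eq_mul, Fintype.card_eq_nat_card]
  rw [← h1]
  have : (Nat.card Q : ℂ) ≠ 0 := by exact_mod_cast Nat.card_pos.ne'
  push_cast
  field_simp

theorem aux_induced_sum {P : Type} [Group P] [Fintype P] (M : Subgroup P) [M.Normal]
    (Q : Subgroup P) (V : FDRep ℂ Q) :
    ∑ x : M, inducedChar Q V.character (x : P) =
      ((Q.index * (Nat.card (M.subgroupOf Q) * Module.finrank ℂ
        (Representation.invariants (V.ρ.comp (M.subgroupOf Q).subtype))) : ℕ) : ℂ) := by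
  let F : P → ℂ := fun z => if h : z ∈ Q then V.character ⟨z, h⟩ else 0
  have h1 : ∀ y : P, ∑ x : M, F (y * x * y⁻¹) = ∑ x : M, F x := by
    intro y
    exact Equiv.sum_comp (MulAut.conjNormal (H := M) y).toEquiv (fun x : M => F x)
  have h2 : ∑ x : M, F x = ∑ k : M.subgroupOf Q, V.character (k : Q) := by
    have h3 : ∑ k : M.subgroupOf Q, V.character (k : Q)
        = ∑ q : Q, if (q : P) ∈ M then F q else 0 := by
      rw [aux_sum_subgroup]
      refine Finset.sum_congr rfl fun q _ => ?_
      simp [F, Subgroup.mem_subgroupOf]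
    rw [h3, aux_sum_subgroup, aux_sum_subgroup Q (fun z => if z ∈ M then F z else 0)]
    refine Finset.sum_congr rfl fun z _ => ?_
    by_cases hz : z ∈ Q <;> simp [F, hz]
  have h4 : ∑ k : M.subgroupOf Q, V.character (k : Q) = (Nat.card (M.subgroupOf Q) : ℂ) *
      Module.finrank ℂ (Representation.invariants (V.ρ.comp (M.subgroupOf Q).subtype)) := by
    have hne : (Nat.card (M.subgroupOf Q) : ℂ) ≠ 0 := by exact_mod_cast Nat.card_pos.ne'
    have := invertibleOfNonzero hne
    rw [← Representation.card_inv_mul_sum_char_eq_finrank, mul_inv_cancel_left₀ hne]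
    rfl
  unfold inducedChar
  rw [← Finset.mul_sum, Finset.sum_comm]
  change _ * ∑ y : P, ∑ x : M, F (y * x * y⁻¹) = _
  simp only [h1, h2, h4]
  have h5 := Subgroup.card_mul_index Q
  simp only [Finset.sum_const, Finset.card_univ, nsmul_eq_mul, Fintype.card_eq_nat_card]
  rw [← h5]
  have : (Nat.card Q : ℂ) ≠ 0 := by exact_mod_cast Nat.card_pos.ne'
  push_cast
  field_simp

theorem aux_finrank_pos {A : Type} [Group A] [Fintype A] (V : FDRep ℂ A)
    (hV : CategoryTheory.Simple V) : 0 < Module.finrank ℂ V := by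
  rw [Nat.pos_iff_ne_zero]
  intro h
  rw [FDRep.simple_iff_char_is_norm_one] at hV
  have hs : Subsingleton V := Module.finrank_zero_iff.mp h
  have : ∀ a, V.character a = 0 := by
    intro a
    unfold FDRep.character
    rw [Subsingleton.elim (V.ρ a) 0, map_zero]
  simp only [this] at hV
  simp at hV
  have h0 : (Fintype.card A : ℂ) ≠ 0 := by exact_mod_cast Fintype.card_ne_zero
  exact h0 hV.symm

theorem aux_kernel {P : Type} [Group P] [Fintype P] (M : Subgroup P) [M.Normal] (n : ℕ)
    (Q : Fin n → Subgroup P) (V : ∀ i, FDRep ℂ (Q i)) (hV : ∀ i, CategoryTheory.Simple (V i))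
    (h : ∀ x : M, ∑ i, inducedChar (Q i) (V i).character (x : P) =
      ∑ i, inducedChar (Q i) (V i).character 1) (i : Fin n) :
    M ≤ Q i ∧ ∀ q : Q i, (q : P) ∈ M → (V i).ρ q = 1 := by
  let r : Fin n → ℕ := fun i => Module.finrank ℂ
        (Representation.invariants ((V i).ρ.comp (M.subgroupOf (Q i)).subtype))
  have hr : ∀ i, r i ≤ Module.finrank ℂ (V i) := fun i => Submodule.finrank_le _
  have hk : ∀ i, Nat.card (M.subgroupOf (Q i)) ≤ Nat.card M := fun i =>
    Nat.card_le_card_of_injective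
      (fun k : M.subgroupOf (Q i) => (⟨k.1.1, k.2⟩ : M))
      (fun a b hab => Subtype.ext (Subtype.ext (congrArg (fun z : M => (z : P)) hab)))
  have hs : ∑ i, (Q i).index * (Nat.card (M.subgroupOf (Q i)) * r i)
      = ∑ i, (Q i).index * (Nat.card M * Module.finrank ℂ (V i)) := by
    have h1 := Finset.sum_congr (rfl : (Finset.univ : Finset M) = Finset.univ) (fun x _ => h x)
    rw [Finset.sum_comm] at h1
    simp only [aux_induced_sum, aux_induced_one, FDRep.char_one, Finset.sum_const,
      Finset.card_univ, nsmul_eq_mul, Fintype.card_eq_nat_card, Finset.mul_sum] at h1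
    have h2 : ((∑ i, (Q i).index * (Nat.card (M.subgroupOf (Q i)) * r i) : ℕ) : ℂ)
      = ((∑ i, (Q i).index * (Nat.card M * Module.finrank ℂ (V i)) : ℕ) : ℂ) := by
      push_cast at h1 ⊢
      rw [h1]
      exact Finset.sum_congr rfl fun i _ => by ring
    exact_mod_cast h2
  have hle : ∀ i ∈ Finset.univ, (Q i).index * (Nat.card (M.subgroupOf (Q i)) * r i)
      ≤ (Q i).index * (Nat.card M * Module.finrank ℂ (V i)) := fun i _ =>
    Nat.mul_le_mul_left _ (Nat.mul_le_mul (hk i) (hr i))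
  have he := (Finset.sum_eq_sum_iff_of_le hle).mp hs i (Finset.mem_univ i)
  have hidx : 0 < (Q i).index := Nat.pos_of_ne_zero Subgroup.index_ne_zero_of_finite
  have he' := Nat.eq_of_mul_eq_mul_left hidx he
  have hd := aux_finrank_pos (V i) (hV i)
  have hM : 0 < Nat.card M := Nat.card_pos
  have hki := hk i
  have hri := hr i
  have e1 : Nat.card (M.subgroupOf (Q i)) = Nat.card M := by
    by_contra hne
    have hlt := lt_of_le_of_ne hki hne
    nlinarith
  have e2 : r i = Module.finrank ℂ (V i) := by
    rw [e1] at he'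
    exact Nat.eq_of_mul_eq_mul_left hM he'
  constructor
  · intro x hx
    have hinj : Function.Injective (fun k : M.subgroupOf (Q i) => (⟨k.1.1, k.2⟩ : M)) :=
      (fun a b hab => Subtype.ext (Subtype.ext (congrArg (fun z : M => (z : P)) hab)))
    have hbij := (Nat.bijective_iff_injective_and_card _).mpr ⟨hinj, e1⟩
    obtain ⟨k, hkx⟩ := hbij.2 ⟨x, hx⟩
    have := congrArg Subtype.val hkx
    simp only at this
    rw [← this]
    exact k.1.2
  · intro q hq
    have htop := Submodule.eq_top_of_finrank_eq e2
    ext v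
    have hv : v ∈ Representation.invariants ((V i).ρ.comp (M.subgroupOf (Q i)).subtype) := by
      rw [htop]; trivial
    exact hv ⟨q, hq⟩

theorem aux_relIndex {G : Type} [Group G] [Fintype G] (H N : Subgroup G) [N.Normal] :
    H.relIndex (H ⊔ N) = H.relIndex N := by
  have h1 := Subgroup.relIndex_mul_relIndex (H ⊓ N) H (H ⊔ N) inf_le_left le_sup_left
  have h2 := Subgroup.relIndex_mul_relIndex (H ⊓ N) N (H ⊔ N) inf_le_right le_sup_right
  rw [Subgroup.inf_relIndex_left] at h1
  rw [Subgroup.inf_relIndex_right, Subgroup.relIndex_sup_right, ← h1, mul_comm] at h2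
  have h3 : N.relIndex H ≠ 0 := Subgroup.index_ne_zero_of_finite
  exact (Nat.eq_of_mul_eq_mul_left (Nat.pos_of_ne_zero h3) h2).symm

theorem aux_hom_lift {A B C : Type*} [Group A] [Group B] [Monoid C] (f : A →* B)
    (hs : Function.Surjective f) (g : A →* C) (hk : ∀ a, f a = 1 → g a = 1) :
    ∃ r : B →* C, ∀ a, r (f a) = g a := by
  have key : ∀ a b, f a = f b → g a = g b := by
    intro a b hab
    have h1 : g (a * b⁻¹) = 1 := hk _ (by simp [hab])
    calc g a = g (a * b⁻¹ * b) := by simp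
      _ = g b := by rw [map_mul, h1, one_mul]
  have hi := Function.surjInv_eq hs
  refine ⟨⟨⟨fun b => g (Function.surjInv hs b), ?_⟩, ?_⟩, fun a => ?_⟩
  · rw [← map_one g]; exact key _ _ (by rw [hi, map_one])
  · intro x y
    change g _ = g _ * g _
    rw [← map_mul]; exact key _ _ (by rw [map_mul, hi, hi, hi])
  · exact key _ _ (hi _)

theorem aux_lift {A B : Type} [Group A] [Group B] [Fintype A] [Fintype B] (f : A →* B)
    (hs : Function.Surjective f) (V : FDRep ℂ A) (hV : CategoryTheory.Simple V)
    (hk : ∀ a, f a = 1 → V.ρ a = 1) :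
    ∃ U : FDRep ℂ B, CategoryTheory.Simple U ∧ ∀ a, V.character a = U.character (f a) := by
  obtain ⟨ρ', hρ⟩ := aux_hom_lift f hs V.ρ hk
  have hc : ∀ a, V.character a = (FDRep.of ρ').character (f a) := by
    intro a
    change _ = LinearMap.trace ℂ V (ρ' (f a))
    rw [hρ]
    rfl
  exact ⟨FDRep.of ρ', (aux_simple_iff_s8 _ hs _ _ hc).mp hV, hc⟩

theorem aux_index (p : ℕ) [Fact p.Prime] (G : Type) [Group G] [Fintype G] (P : Sylow p G)
    (N : Subgroup G) [N.Normal] (H : Subgroup G) (hH : (P : Subgroup G) ⊓ N ≤ H) :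
    (H.index).factorization p = ((H.map (QuotientGroup.mk' N)).index).factorization p := by
  have hp : p.Prime := Fact.out
  have e1 : (H.map (QuotientGroup.mk' N)).index = (H ⊔ N).index := by
    rw [Subgroup.index_map, QuotientGroup.ker_mk',
      MonoidHom.range_eq_top_of_surjective _ (QuotientGroup.mk'_surjective N),
      Subgroup.index_top, mul_one]
  have e2 : H.relIndex (H ⊔ N) * (H ⊔ N).index = H.index := Subgroup.relIndex_mul_index le_sup_left
  have e3 : ¬ p ∣ H.relIndex (H ⊔ N) := by
    rw [aux_relIndex]
    have d1 : H.relIndex N ∣ (P : Subgroup G).relIndex N := by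
      rw [← Subgroup.inf_relIndex_right (P : Subgroup G) N]
      exact Subgroup.relIndex_dvd_of_le_left N hH
    have d2 : (P : Subgroup G).relIndex N ∣ (P : Subgroup G).index := by
      rw [← aux_relIndex, ← Subgroup.relIndex_mul_index
        (le_sup_left : (P : Subgroup G) ≤ (P : Subgroup G) ⊔ N)]
      exact dvd_mul_right _ _
    exact fun hd => P.not_dvd_index (hd.trans (d1.trans d2))
  rw [e1, ← e2, Nat.factorization_mul]
  · simp [Nat.factorization_eq_zero_of_not_dvd e3]
  · exact Subgroup.index_ne_zero_of_finite
  · exact Subgroup.index_ne_zero_of_finite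

theorem aux_main (p : ℕ) [Fact p.Prime] (G : Type) [Group G] [Fintype G] (P : Sylow p G)
    (N : Subgroup G) [N.Normal] (W : FDRep ℂ (G ⧸ N))
    (h : SumInducedPropertyAmb p (P : Subgroup G) (fun g => W.character (g : G ⧸ N))
      (Module.finrank ℂ W)) :
    SumInducedPropertyAmb p ((P : Subgroup G).map (QuotientGroup.mk' N)) W.character
      (Module.finrank ℂ W) := by
  obtain ⟨n, Q, lam, hirr, hdeg, hsum⟩ := h
  choose V hV hlam using hirr
  obtain rfl : lam = fun i => (V i).character := funext hlam
  let f := (QuotientGroup.mk' N).subgroupMap (P : Subgroup G)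
  have hf : Function.Surjective f := MonoidHom.subgroupMap_surjective _ _
  have hker : ∀ x, x ∈ f.ker ↔ (x : G) ∈ N := by
    intro x
    rw [MonoidHom.mem_ker, Subtype.ext_iff]
    exact QuotientGroup.eq_one_iff (x : G)
  have key := aux_kernel f.ker n Q V hV (by
    intro x
    rw [← hsum, ← hsum]
    have := (hker x).mp x.2
    simp only [(QuotientGroup.eq_one_iff _).mpr this]
    simp)
  have hlift : ∀ i, ∃ U : FDRep ℂ ((Q i).map f), CategoryTheory.Simple U ∧
      ∀ q, (V i).character q = U.character (f.subgroupMap (Q i) q) := by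
    intro i
    have hs : Function.Surjective (f.subgroupMap (Q i)) := MonoidHom.subgroupMap_surjective _ _
    exact aux_lift _ hs (V i) (hV i) fun q hq => (key i).2 q (congrArg Subtype.val hq)
  choose U hU hUc using hlift
  refine ⟨n, fun i => (Q i).map f, fun i => (U i).character, fun i => ⟨U i, hU i, rfl⟩, ?_, ?_⟩
  · intro i
    rw [hdeg i, aux_index p G P N]
    · have : ((Q i).map (P : Subgroup G).subtype).map (QuotientGroup.mk' N) =
        ((Q i).map f).map ((P : Subgroup G).map (QuotientGroup.mk' N)).subtype := by
        rw [Subgroup.map_map, Subgroup.map_map]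
        rfl
      rw [this]
    · rintro x ⟨hxP, hxN⟩
      exact ⟨⟨x, hxP⟩, (key i).1 ((hker _).mpr hxN), rfl⟩
  · intro y
    obtain ⟨x, rfl⟩ := hf y
    have := hsum x
    refine this.trans (Finset.sum_congr rfl fun i _ => ?_)
    exact aux_induced f hf (Q i) (key i).1 _ _ (hUc i) x

theorem strong_form_passes_to_quotients
    (p : ℕ) [Fact p.Prime] (G : Type) [Group G] [Fintype G]
    -- the strong form of the conjecture holds for `G`:
    (hyp : ∀ (P : Sylow p G) (V : FDRep ℂ G), CategoryTheory.Simple V →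
      SumInducedPropertyAmb p (P : Subgroup G) V.character (Module.finrank ℂ V)) :
    -- then it also holds for every quotient of `G`:
    ∀ (N : Subgroup G) (_ : N.Normal) (Pbar : Sylow p (G ⧸ N))
      (W : FDRep ℂ (G ⧸ N)), CategoryTheory.Simple W →
      SumInducedPropertyAmb p (Pbar : Subgroup (G ⧸ N)) W.character
        (Module.finrank ℂ W) := by
  intro N hN Pbar W hW
  obtain ⟨P, rfl⟩ := Sylow.mapSurjective_surjective (QuotientGroup.mk'_surjective N) p Pbar
  refine aux_main p G P N W ?_
  exact hyp P (FDRep.of (W.ρ.comp (QuotientGroup.mk' N)))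
    ((aux_simple_iff_s8 (QuotientGroup.mk' N) (QuotientGroup.mk'_surjective N) _ _
      (fun _ => rfl)).mpr hW)
end
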